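/- Let K be a commutative semiring with 0 ≠ 1 and let S : Δ* → K be an algebraic formal power series. Then there exists a first-order sentence φ ∈ sRFO(K) over nested words such that S = ⟦∃ν.φ⟧^nest, i.e. (S, w) = ∑_{ν ∈ Nest_{|w|}} (⟦φ⟧, (w,ν)) for all w ∈ Δ*. -/

import Mathlib

/-! ### Nested words and weighted nested word automata -/

/-- A nesting relation of width `n` (positions `1,…,n`). -/
def IsNestingRel (n : ℕ) (ν : ℕ → ℕ → Prop) : Prop :=
  (∀ i j, ν i j → 1 ≤ i ∧ i < j ∧ j ≤ n) ∧
  (∀ i j j', ν i j → ν i j' → j = j') ∧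
  (∀ i i' j, ν i j → ν i' j → i = i') ∧
  (∀ i j i' j', ν i j → ν i' j' → i < i' → j < i' ∨ j' < j)

/-- A nested word over `Δ`: a nonempty word together with a nesting relation. -/
structure NestedWord (Δ : Type) : Type where
  word : List Δ
  ne : word ≠ []
  rel : ℕ → ℕ → Prop
  isNest : IsNestingRel word.length rel

namespace NestedWord

variable {Δ : Type} (nw : NestedWord Δ)

/-- The length of the nested word. -/
def len : ℕ := nw.word.length

/-- The letter at (1-based) position `j`. -/
def letter (j : ℕ) : Δ := nw.word.getD (j - 1) (nw.word.head nw.ne)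

def IsCall (j : ℕ) : Prop := ∃ i, nw.rel j i
def IsReturn (j : ℕ) : Prop := ∃ i, nw.rel i j
def IsInternal (j : ℕ) : Prop :=
  1 ≤ j ∧ j ≤ nw.len ∧ ¬ nw.IsCall j ∧ ¬ nw.IsReturn j

/-- The nesting depth of position `k`: the number of arches open at `k`. -/
noncomputable def depth (k : ℕ) : ℕ :=
  Set.ncard {p : ℕ × ℕ | nw.rel p.1 p.2 ∧ p.1 ≤ k ∧ k ≤ p.2}

end NestedWord

/-- Clamp a function on `Fin (n+1)` to a function on `ℕ`. -/
def clampFun {Q : Type} {n : ℕ} (r : Fin (n + 1) → Q) : ℕ → Q :=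
  fun k => r ⟨min k n, Nat.lt_succ_of_le (min_le_right _ _)⟩

/-- A weighted nested word automaton over the commutative semiring `K`. -/
structure WNWA (K Δ : Type) [CommSemiring K] : Type 1 where
  Q : Type
  [fintQ : Fintype Q]
  ι : Q → K
  δcall : Q → Δ → Q → K
  δint : Q → Δ → Q → K
  δret : Q → Q → Δ → Q → K
  κ : Q → K

attribute [instance] WNWA.fintQ

namespace WNWA

variable {K Δ : Type} [CommSemiring K]

open Classical in
/-- The weight contributed by position `j` in a run `ρ`. -/
noncomputable def posWeight (A : WNWA K Δ) (nw : NestedWord Δ) (ρ : ℕ → A.Q) (j : ℕ) : K :=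
  if nw.IsCall j then A.δcall (ρ (j - 1)) (nw.letter j) (ρ j)
  else if h : nw.IsReturn j then
    A.δret (ρ (j - 1)) (ρ (h.choose - 1)) (nw.letter j) (ρ j)
  else A.δint (ρ (j - 1)) (nw.letter j) (ρ j)

/-- The weight of a run. -/
noncomputable def runWeight (A : WNWA K Δ) (nw : NestedWord Δ) (ρ : ℕ → A.Q) : K :=
  ∏ j ∈ Finset.Icc 1 nw.len, A.posWeight nw ρ j

/-- The behavior of a weighted nested word automaton. -/
noncomputable def behavior (A : WNWA K Δ) (nw : NestedWord Δ) : K :=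
  ∑ r : Fin (nw.len + 1) → A.Q,
    A.ι (r 0) * A.runWeight nw (clampFun r) * A.κ (r (Fin.last _))

end WNWA

/-- A nested word series is regular if it is the behavior of some WNWA. -/
def NWRegular {K Δ : Type} [CommSemiring K] (S : NestedWord Δ → K) : Prop :=
  ∃ A : WNWA K Δ, ∀ nw, A.behavior nw = S nw
/-! ### Weighted MSO logic over nested words -/

/-- Weighted MSO formulae over nested words: constants from `K`, atomic formulae
and their negations, closed under `∨`, `∧`, and the four quantifiers. -/
inductive WMSO (K Δ : Type) : Type where
  | const : K → WMSO K Δ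
  | eqv : ℕ → ℕ → WMSO K Δ
  | lab : Δ → ℕ → WMSO K Δ
  | lev : ℕ → ℕ → WMSO K Δ
  | nuv : ℕ → ℕ → WMSO K Δ
  | mem : ℕ → ℕ → WMSO K Δ
  | neq : ℕ → ℕ → WMSO K Δ
  | nlab : Δ → ℕ → WMSO K Δ
  | nle : ℕ → ℕ → WMSO K Δ
  | nnu : ℕ → ℕ → WMSO K Δ
  | nmem : ℕ → ℕ → WMSO K Δ
  | or : WMSO K Δ → WMSO K Δ → WMSO K Δ
  | and : WMSO K Δ → WMSO K Δ → WMSO K Δ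
  | exF : ℕ → WMSO K Δ → WMSO K Δ
  | exS : ℕ → WMSO K Δ → WMSO K Δ
  | alF : ℕ → WMSO K Δ → WMSO K Δ
  | alS : ℕ → WMSO K Δ → WMSO K Δ

namespace WMSO

variable {K Δ : Type} [CommSemiring K]

open Classical in
/-- Weighted semantics: `∨ ↦ +`, `∧ ↦ ·`, `∃ ↦ Σ`, `∀ ↦ Π`. -/
noncomputable def sem (nw : NestedWord Δ) :
    WMSO K Δ → (ℕ → ℕ) → (ℕ → Finset ℕ) → K
  | .const k, _, _ => k
  | .eqv x y, γ1, _ => if γ1 x = γ1 y then 1 else 0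
  | .lab a x, γ1, _ => if nw.letter (γ1 x) = a then 1 else 0
  | .lev x y, γ1, _ => if γ1 x ≤ γ1 y then 1 else 0
  | .nuv x y, γ1, _ => if nw.rel (γ1 x) (γ1 y) then 1 else 0
  | .mem x X, γ1, γ2 => if γ1 x ∈ γ2 X then 1 else 0
  | .neq x y, γ1, _ => if γ1 x = γ1 y then 0 else 1
  | .nlab a x, γ1, _ => if nw.letter (γ1 x) = a then 0 else 1
  | .nle x y, γ1, _ => if γ1 x ≤ γ1 y then 0 else 1
  | .nnu x y, γ1, _ => if nw.rel (γ1 x) (γ1 y) then 0 else 1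
  | .nmem x X, γ1, γ2 => if γ1 x ∈ γ2 X then 0 else 1
  | .or φ ψ, γ1, γ2 => sem nw φ γ1 γ2 + sem nw ψ γ1 γ2
  | .and φ ψ, γ1, γ2 => sem nw φ γ1 γ2 * sem nw ψ γ1 γ2
  | .exF x φ, γ1, γ2 =>
      ∑ i ∈ Finset.Icc 1 nw.len, sem nw φ (Function.update γ1 x i) γ2
  | .exS X φ, γ1, γ2 =>
      ∑ T ∈ (Finset.Icc 1 nw.len).powerset, sem nw φ γ1 (Function.update γ2 X T)
  | .alF x φ, γ1, γ2 =>
      ∏ i ∈ Finset.Icc 1 nw.len, sem nw φ (Function.update γ1 x i) γ2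
  | .alS X φ, γ1, γ2 =>
      ∏ T ∈ (Finset.Icc 1 nw.len).powerset, sem nw φ γ1 (Function.update γ2 X T)

/-- Free first-order variables. -/
def freeF : WMSO K Δ → Finset ℕ
  | .const _ => ∅
  | .eqv x y => {x, y}
  | .lab _ x => {x}
  | .lev x y => {x, y}
  | .nuv x y => {x, y}
  | .mem x _ => {x}
  | .neq x y => {x, y}
  | .nlab _ x => {x}
  | .nle x y => {x, y}
  | .nnu x y => {x, y}
  | .nmem x _ => {x}
  | .or φ ψ => φ.freeF ∪ ψ.freeF
  | .and φ ψ => φ.freeF ∪ ψ.freeF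
  | .exF x φ => φ.freeF.erase x
  | .exS _ φ => φ.freeF
  | .alF x φ => φ.freeF.erase x
  | .alS _ φ => φ.freeF

/-- Free second-order variables. -/
def freeS : WMSO K Δ → Finset ℕ
  | .mem _ X => {X}
  | .nmem _ X => {X}
  | .or φ ψ => φ.freeS ∪ ψ.freeS
  | .and φ ψ => φ.freeS ∪ ψ.freeS
  | .exF _ φ => φ.freeS
  | .alF _ φ => φ.freeS
  | .exS X φ => φ.freeS.erase X
  | .alS X φ => φ.freeS.erase X
  | _ => ∅

/-- Sentences: no free variables. -/
def Sentence (φ : WMSO K Δ) : Prop := φ.freeF = ∅ ∧ φ.freeS = ∅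

end WMSO

/-! ### Classical MSO over nested words and syntactically unambiguous formulae -/

/-- Classical MSO formulae over nested words. -/
inductive MSOF (Δ : Type) : Type where
  | eqv : ℕ → ℕ → MSOF Δ
  | lab : Δ → ℕ → MSOF Δ
  | lev : ℕ → ℕ → MSOF Δ
  | nuv : ℕ → ℕ → MSOF Δ
  | mem : ℕ → ℕ → MSOF Δ
  | not : MSOF Δ → MSOF Δ
  | or : MSOF Δ → MSOF Δ → MSOF Δ
  | and : MSOF Δ → MSOF Δ → MSOF Δ
  | exF : ℕ → MSOF Δ → MSOF Δ
  | exS : ℕ → MSOF Δ → MSOF Δ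
  | alF : ℕ → MSOF Δ → MSOF Δ
  | alS : ℕ → MSOF Δ → MSOF Δ

namespace MSOF

variable {Δ : Type}

/-- Substitution of first-order variable `x` by `y` (capture cannot occur for fresh `y`). -/
def substF (x y : ℕ) : MSOF Δ → MSOF Δ
  | eqv u v => eqv (if u = x then y else u) (if v = x then y else v)
  | lab a u => lab a (if u = x then y else u)
  | lev u v => lev (if u = x then y else u) (if v = x then y else v)
  | nuv u v => nuv (if u = x then y else u) (if v = x then y else v)
  | mem u X => mem (if u = x then y else u) X
  | not φ => not (substF x y φ)
  | or φ ψ => or (substF x y φ) (substF x y ψ)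
  | and φ ψ => and (substF x y φ) (substF x y ψ)
  | exF z φ => if z = x then exF z φ else exF z (substF x y φ)
  | exS Z φ => exS Z (substF x y φ)
  | alF z φ => if z = x then alF z φ else alF z (substF x y φ)
  | alS Z φ => alS Z (substF x y φ)

/-- Substitution of second-order variable `X` by `Y`. -/
def substS (X Y : ℕ) : MSOF Δ → MSOF Δ
  | mem u Z => mem u (if Z = X then Y else Z)
  | not φ => not (substS X Y φ)
  | or φ ψ => or (substS X Y φ) (substS X Y ψ)
  | and φ ψ => and (substS X Y φ) (substS X Y ψ)
  | exF z φ => exF z (substS X Y φ)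
  | exS Z φ => if Z = X then exS Z φ else exS Z (substS X Y φ)
  | alF z φ => alF z (substS X Y φ)
  | alS Z φ => if Z = X then alS Z φ else alS Z (substS X Y φ)
  | φ => φ

/-- Largest first-order variable occurring (free or bound). -/
def maxF : MSOF Δ → ℕ
  | eqv u v => max u v
  | lab _ u => u
  | lev u v => max u v
  | nuv u v => max u v
  | mem u _ => u
  | not φ => φ.maxF
  | or φ ψ => max φ.maxF ψ.maxF
  | and φ ψ => max φ.maxF ψ.maxF
  | exF z φ => max z φ.maxF
  | exS _ φ => φ.maxF
  | alF z φ => max z φ.maxF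
  | alS _ φ => φ.maxF

/-- Largest second-order variable occurring (free or bound). -/
def maxS : MSOF Δ → ℕ
  | mem _ X => X
  | not φ => φ.maxS
  | or φ ψ => max φ.maxS ψ.maxS
  | and φ ψ => max φ.maxS ψ.maxS
  | exF _ φ => φ.maxS
  | exS Z φ => max Z φ.maxS
  | alF _ φ => φ.maxS
  | alS Z φ => max Z φ.maxS
  | _ => 0

end MSOF

/-- The lexicographic (strict) order `Y < X` on sets, used to disambiguate set
quantification: `∃y. y ∈ X ∧ ¬ y ∈ Y ∧ ∀z. (z < y → (z ∈ Y ↔ z ∈ X))`,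
where `y` and `z` are the first-order variables `0` and `1`. -/
def lessSet {Δ : Type} (Y X : ℕ) : MSOF Δ :=
  .exF 0 (.and (.mem 0 X) (.and (.not (.mem 0 Y))
    (.alF 1 (.or (.lev 0 1)
      (.and (.or (.not (.mem 1 Y)) (.mem 1 X)) (.or (.not (.mem 1 X)) (.mem 1 Y)))))))

mutual
  /-- `PlusOf K ψ φ` : `φ = ψ⁺`, the positive syntactically unambiguous weighted
  version of the classical formula `ψ`. -/
  inductive PlusOf (K : Type) {Δ : Type} : MSOF Δ → WMSO K Δ → Prop where
    | eqv : ∀ x y, PlusOf K (.eqv x y) (.eqv x y)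
    | lab : ∀ (a : Δ) x, PlusOf K (.lab a x) (.lab a x)
    | lev : ∀ x y, PlusOf K (.lev x y) (.lev x y)
    | nuv : ∀ x y, PlusOf K (.nuv x y) (.nuv x y)
    | mem : ∀ x X, PlusOf K (.mem x X) (.mem x X)
    | not : ∀ {ψ : MSOF Δ} {χ}, MinusOf K ψ χ → PlusOf K (.not ψ) χ
    | or : ∀ {ψ₁ ψ₂ : MSOF Δ} {a b c}, PlusOf K ψ₁ a → MinusOf K ψ₁ b → PlusOf K ψ₂ c →
        PlusOf K (.or ψ₁ ψ₂) (.or a (.and b c))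
    | and : ∀ {ψ₁ ψ₂ : MSOF Δ} {a b}, PlusOf K ψ₁ a → PlusOf K ψ₂ b →
        PlusOf K (.and ψ₁ ψ₂) (.and a b)
    | exF : ∀ {x : ℕ} {ψ : MSOF Δ} {a χ} (y : ℕ), y = (MSOF.exF x ψ).maxF + 1 →
        PlusOf K ψ a →
        MinusOf K (.and (.not (.lev x y)) (ψ.substF x y)) χ →
        PlusOf K (.exF x ψ) (.exF x (.and a (.alF y χ)))
    | alF : ∀ {x : ℕ} {ψ : MSOF Δ} {a}, PlusOf K ψ a → PlusOf K (.alF x ψ) (.alF x a)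
    | exS : ∀ {X : ℕ} {ψ : MSOF Δ} {a χ} (Y : ℕ), Y = (MSOF.exS X ψ).maxS + 1 →
        PlusOf K ψ a →
        MinusOf K (.and (lessSet Y X) (ψ.substS X Y)) χ →
        PlusOf K (.exS X ψ) (.exS X (.and a (.alS Y χ)))
    | alS : ∀ {X : ℕ} {ψ : MSOF Δ} {a}, PlusOf K ψ a → PlusOf K (.alS X ψ) (.alS X a)

  /-- `MinusOf K ψ φ` : `φ = ψ⁻`. -/
  inductive MinusOf (K : Type) {Δ : Type} : MSOF Δ → WMSO K Δ → Prop where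
    | eqv : ∀ x y, MinusOf K (.eqv x y) (.neq x y)
    | lab : ∀ (a : Δ) x, MinusOf K (.lab a x) (.nlab a x)
    | lev : ∀ x y, MinusOf K (.lev x y) (.nle x y)
    | nuv : ∀ x y, MinusOf K (.nuv x y) (.nnu x y)
    | mem : ∀ x X, MinusOf K (.mem x X) (.nmem x X)
    | not : ∀ {ψ : MSOF Δ} {χ}, PlusOf K ψ χ → MinusOf K (.not ψ) χ
    | or : ∀ {ψ₁ ψ₂ : MSOF Δ} {a b}, MinusOf K ψ₁ a → MinusOf K ψ₂ b →
        MinusOf K (.or ψ₁ ψ₂) (.and a b)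
    | and : ∀ {ψ₁ ψ₂ : MSOF Δ} {a b c}, MinusOf K ψ₁ a → PlusOf K ψ₁ b → MinusOf K ψ₂ c →
        MinusOf K (.and ψ₁ ψ₂) (.or a (.and b c))
    | exF : ∀ {x : ℕ} {ψ : MSOF Δ} {a}, MinusOf K ψ a → MinusOf K (.exF x ψ) (.alF x a)
    | alF : ∀ {x : ℕ} {ψ : MSOF Δ} {a χ} (y : ℕ), y = (MSOF.alF x ψ).maxF + 1 →
        MinusOf K ψ a →
        MinusOf K (.and (.not (.lev x y)) (.not (ψ.substF x y))) χ →
        MinusOf K (.alF x ψ) (.exF x (.and a (.alF y χ)))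
    | exS : ∀ {X : ℕ} {ψ : MSOF Δ} {a}, MinusOf K ψ a → MinusOf K (.exS X ψ) (.alS X a)
    | alS : ∀ {X : ℕ} {ψ : MSOF Δ} {a χ} (Y : ℕ), Y = (MSOF.alS X ψ).maxS + 1 →
        MinusOf K ψ a →
        MinusOf K (.and (lessSet Y X) (.not (ψ.substS X Y))) χ →
        MinusOf K (.alS X ψ) (.exS X (.and a (.alS Y χ)))
end

/-- A weighted formula is syntactically unambiguous if it is of the form `ψ⁺` or
`ψ⁻` for a classical formula `ψ`. -/
def SyntUnamb {K Δ : Type} (φ : WMSO K Δ) : Prop :=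
  ∃ ψ : MSOF Δ, PlusOf K ψ φ ∨ MinusOf K ψ φ

/-- Almost unambiguous formulae: the smallest class containing all constants and
all syntactically unambiguous formulae which is closed under `∧` and `∨`. -/
inductive AUMSO {K Δ : Type} : WMSO K Δ → Prop where
  | const (k : K) : AUMSO (.const k)
  | unamb {φ : WMSO K Δ} : SyntUnamb φ → AUMSO φ
  | and {φ ψ : WMSO K Δ} : AUMSO φ → AUMSO ψ → AUMSO (.and φ ψ)
  | or {φ ψ : WMSO K Δ} : AUMSO φ → AUMSO ψ → AUMSO (.or φ ψ)

/-- Weakly unambiguous formulae: additionally closed under existential quantification. -/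
inductive WUMSO {K Δ : Type} : WMSO K Δ → Prop where
  | const (k : K) : WUMSO (.const k)
  | unamb {φ : WMSO K Δ} : SyntUnamb φ → WUMSO φ
  | and {φ ψ : WMSO K Δ} : WUMSO φ → WUMSO ψ → WUMSO (.and φ ψ)
  | or {φ ψ : WMSO K Δ} : WUMSO φ → WUMSO ψ → WUMSO (.or φ ψ)
  | exF {x : ℕ} {φ : WMSO K Δ} : WUMSO φ → WUMSO (.exF x φ)
  | exS {X : ℕ} {φ : WMSO K Δ} : WUMSO φ → WUMSO (.exS X φ)

/-- Syntactically restricted MSO: every subformula `∀X.ψ` has `ψ` syntactically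
unambiguous and every subformula `∀x.ψ` has `ψ` almost unambiguous. -/
def SRMSO {K Δ : Type} : WMSO K Δ → Prop
  | .or φ ψ => SRMSO φ ∧ SRMSO ψ
  | .and φ ψ => SRMSO φ ∧ SRMSO ψ
  | .exF _ φ => SRMSO φ
  | .exS _ φ => SRMSO φ
  | .alF _ φ => AUMSO φ ∧ SRMSO φ
  | .alS _ φ => SyntUnamb φ ∧ SRMSO φ
  | _ => True

/-- Syntactically weakly restricted MSO. -/
def SWRMSO {K Δ : Type} : WMSO K Δ → Prop
  | .or φ ψ => SWRMSO φ ∧ SWRMSO ψ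
  | .and φ ψ => SWRMSO φ ∧ SWRMSO ψ
  | .exF _ φ => SWRMSO φ
  | .exS _ φ => SWRMSO φ
  | .alF _ φ => WUMSO φ ∧ SWRMSO φ
  | .alS _ φ => SyntUnamb φ ∧ SWRMSO φ
  | _ => True

/-- Formulae without set quantification. -/
def NoSetQuant {K Δ : Type} : WMSO K Δ → Prop
  | .or φ ψ => NoSetQuant φ ∧ NoSetQuant ψ
  | .and φ ψ => NoSetQuant φ ∧ NoSetQuant ψ
  | .exF _ φ => NoSetQuant φ
  | .alF _ φ => NoSetQuant φ
  | .exS _ _ => False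
  | .alS _ _ => False
  | _ => True

/-- First-order fragment of `SRMSO`. -/
def SRFO {K Δ : Type} (φ : WMSO K Δ) : Prop := SRMSO φ ∧ NoSetQuant φ

/-- `∃X₁.…∃Xₘ.ψ` with `ψ ∈ sRFO(K)`. -/
inductive SREMSO {K Δ : Type} : WMSO K Δ → Prop where
  | base {φ : WMSO K Δ} : SRFO φ → SREMSO φ
  | exS {X : ℕ} {φ : WMSO K Δ} : SREMSO φ → SREMSO (.exS X φ)

/-- A nested word series is `Z`-definable if it is the semantics of a sentence in `Z`. -/
def NWDefinable {K Δ : Type} [CommSemiring K] (Z : WMSO K Δ → Prop)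
    (S : NestedWord Δ → K) : Prop :=
  ∃ φ : WMSO K Δ, Z φ ∧ φ.Sentence ∧ ∀ nw γ1 γ2, φ.sem nw γ1 γ2 = S nw
/-! ### Algebraic formal power series -/

section Algebraic

variable {K Δ : Type} [CommSemiring K]

open Classical in
/-- Given a family of series `(S_X)` and a word `u ∈ (Δ ∪ 𝒳)*`, the series
`u₁ S_{X₁} u₂ ⋯ u_k S_{X_k} u_{k+1}` obtained by substituting `S_X` for each
variable `X` in `u` and taking Cauchy products. -/
noncomputable def wordSeries {X : Type} (S : X → List Δ → K) :
    List (Δ ⊕ X) → List Δ → K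
  | [] => fun w => if w = [] then 1 else 0
  | (Sum.inl a) :: rest => fun w =>
      match w with
      | [] => 0
      | b :: w' => if b = a then wordSeries S rest w' else 0
  | (Sum.inr x) :: rest => fun w =>
      ∑ k ∈ Finset.range (w.length + 1),
        S x (w.take k) * wordSeries S rest (w.drop k)

/-- `(S_X)` is a solution of the algebraic system `(P_X)`. -/
def IsSolution {X : Type} (P : X → List (Δ ⊕ X) → K) (S : X → List Δ → K) : Prop :=
  ∀ x w, S x w = ∑ᶠ u : List (Δ ⊕ X), P x u * wordSeries S u w

/-- A proper algebraic system: `(P_X, Y) = (P_X, ε) = 0` for all variables `X, Y`. -/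
def IsProper {X : Type} (P : X → List (Δ ⊕ X) → K) : Prop :=
  ∀ x, P x [] = 0 ∧ ∀ y : X, P x [Sum.inr y] = 0

/-- `S : Δ* → K` is an algebraic formal power series: a component of the
(unique) quasiregular solution of a proper algebraic system with finitely
supported polynomials. -/
def IsAlgebraicSeries (K Δ : Type) [CommSemiring K] (S : List Δ → K) : Prop :=
  ∃ (X : Type) (_ : Fintype X) (P : X → List (Δ ⊕ X) → K) (Sol : X → List Δ → K),
    (∀ x, (Function.support (P x)).Finite) ∧
    IsProper P ∧ IsSolution P Sol ∧ (∀ x, Sol x [] = 0) ∧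
    ∃ x₀, ∀ w, S w = Sol x₀ w

end Algebraic
/-- The formal power series `⟦∃ν.φ⟧^nest : Δ* → K`:
`(⟦∃ν.φ⟧^nest, w) = ∑_{ν ∈ Nest_{|w|}} (⟦φ⟧, (w,ν))`. -/
noncomputable def existsNuSem {K Δ : Type} [CommSemiring K]
    (φ : WMSO K Δ) : List Δ → K :=
  fun w => ∑ᶠ (nw : NestedWord Δ) (_ : nw.word = w),
    φ.sem nw (fun _ => 1) (fun _ => ∅)

/-!
On a fixed word of length `n`, the algebraic system becomes a system of equations in the incidence
algebra of the positions `0, …, n`, whose unknowns lie in the nilpotent ideal of functions vanishing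
on the diagonal; there its solution is unique. Over such an ideal, left recursion is removed by a
quasi-inverse. Doing this from the left and from the right brings every right-hand side to double
Greibach form, with terminals at both ends. Substituting right-hand sides for leading variables then
makes the rules long enough for the left-hand side `X` of a rule to be read off the nesting: an
outer arc spans the factor produced by the rule, and inside it a first arc spanning a number of
letters determined by `X` announces `X`.

Derivation trees with right-hand sides of this kind correspond to nestings, and the weight of a tree
is a root weight times the product over all positions `k` of the coefficient of the rule whose outer
arc starts at `k`, or `1` if there is none. Which rule this is depends on boundedly many positions
around a chain of consecutive arcs and letters, so it is first-order definable.
-/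

section LinearOrder

variable {ι K : Type*} [LinearOrder ι] [CommSemiring K]

theorem sum_indicator_least (s : Finset ι) (p : ι → Prop) [DecidablePred p] :
    ∑ i ∈ s, (if p i then (1 : K) else 0) * ∏ j ∈ s,
        ((if i ≤ j then 1 else 0) + (if i ≤ j then 0 else 1) * if p j then 0 else 1) =
      if ∃ i ∈ s, p i then 1 else 0 := by
  split_ifs with h
  · have hne : (s.filter p).Nonempty := by simpa [Finset.Nonempty] using h
    set m := (s.filter p).min' hne
    obtain ⟨hm, hpm⟩ := Finset.mem_filter.1 ((s.filter p).min'_mem hne)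
    have hmin : ∀ j ∈ s, p j → m ≤ j := fun j hj hpj =>
      Finset.min'_le _ _ (Finset.mem_filter.2 ⟨hj, hpj⟩)
    rw [Finset.sum_eq_single_of_mem m hm]
    · rw [if_pos hpm, one_mul]
      refine Finset.prod_eq_one fun j hj => ?_
      by_cases hmj : m ≤ j
      · simp [hmj]
      · simp [hmj, mt (hmin j hj) hmj]
    · intro i hi hne
      by_cases hpi : p i
      · rw [Finset.prod_eq_zero hm, mul_zero]
        have him : ¬ i ≤ m := ((hmin i hi hpi).lt_of_ne' hne).not_ge
        rw [if_neg him, if_neg him, if_pos hpm, mul_zero, add_zero]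
      · simp [hpi]
  · exact Finset.sum_eq_zero fun i hi => by rw [if_neg fun hpi => h ⟨i, hi, hpi⟩, zero_mul]

end LinearOrder

/-! ### Classical first-order formulae and their unambiguous versions -/

/-- Classical first-order formulae over nested words, in the basis `¬`, `∧`, `∃`. -/
inductive FOFormula (Δ : Type) : Type where
  | eqv : ℕ → ℕ → FOFormula Δ
  | lab : Δ → ℕ → FOFormula Δ
  | lev : ℕ → ℕ → FOFormula Δ
  | nuv : ℕ → ℕ → FOFormula Δ
  | not : FOFormula Δ → FOFormula Δ
  | and : FOFormula Δ → FOFormula Δ → FOFormula Δ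
  | exF : ℕ → FOFormula Δ → FOFormula Δ

namespace FOFormula

variable {Δ : Type}

/-- The formula as a classical MSO formula. -/
def toMSOF : FOFormula Δ → MSOF Δ
  | eqv x y => .eqv x y
  | lab a x => .lab a x
  | lev x y => .lev x y
  | nuv x y => .nuv x y
  | not φ => .not φ.toMSOF
  | and φ ψ => .and φ.toMSOF ψ.toMSOF
  | exF x φ => .exF x φ.toMSOF

/-- Satisfaction of a formula by a nested word under an assignment of positions. -/
def Holds (nw : NestedWord Δ) : FOFormula Δ → (ℕ → ℕ) → Prop
  | eqv x y, γ => γ x = γ y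
  | lab a x, γ => nw.letter (γ x) = a
  | lev x y, γ => γ x ≤ γ y
  | nuv x y, γ => nw.rel (γ x) (γ y)
  | not φ, γ => ¬ φ.Holds nw γ
  | and φ ψ, γ => φ.Holds nw γ ∧ ψ.Holds nw γ
  | exF x φ, γ => ∃ i ∈ Finset.Icc 1 nw.len, φ.Holds nw (Function.update γ x i)

/-- The free variables of a formula. -/
def freeVars : FOFormula Δ → Finset ℕ
  | eqv x y => {x, y}
  | lab _ x => {x}
  | lev x y => {x, y}
  | nuv x y => {x, y}
  | not φ => φ.freeVars
  | and φ ψ => φ.freeVars ∪ ψ.freeVars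
  | exF x φ => φ.freeVars.erase x

/-- The number of logical symbols of a formula, a measure unchanged by renaming variables. -/
def size : FOFormula Δ → ℕ
  | not φ => φ.size + 1
  | and φ ψ => φ.size + ψ.size + 1
  | exF _ φ => φ.size + 1
  | _ => 0

/-- Substitution of the variable `y` for the free occurrences of `x`, as in `MSOF.substF`. -/
def subst (x y : ℕ) : FOFormula Δ → FOFormula Δ
  | eqv u v => eqv (if u = x then y else u) (if v = x then y else v)
  | lab a u => lab a (if u = x then y else u)
  | lev u v => lev (if u = x then y else u) (if v = x then y else v)
  | nuv u v => nuv (if u = x then y else u) (if v = x then y else v)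
  | not φ => not (subst x y φ)
  | and φ ψ => and (subst x y φ) (subst x y ψ)
  | exF z φ => if z = x then exF z φ else exF z (subst x y φ)

theorem toMSOF_subst (x y : ℕ) (φ : FOFormula Δ) :
    (φ.subst x y).toMSOF = φ.toMSOF.substF x y := by
  induction φ with
  | exF z φ ih => simp only [subst, toMSOF, MSOF.substF]; split_ifs <;> simp [toMSOF, ih]
  | _ => simp_all [subst, toMSOF, MSOF.substF]

theorem size_subst (x y : ℕ) (φ : FOFormula Δ) : (φ.subst x y).size = φ.size := by
  induction φ with
  | exF z φ ih => simp only [subst]; split_ifs <;> simp [size, ih]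
  | _ => simp_all [subst, size]

theorem freeVars_subst_subset (x y : ℕ) (φ : FOFormula Δ) :
    (φ.subst x y).freeVars ⊆ insert y (φ.freeVars.erase x) := by
  induction φ with
  | exF z φ ih => simp only [subst]; split_ifs <;> grind [freeVars]
  | _ => grind [freeVars, subst]

theorem le_maxF_of_mem_freeVars {φ : FOFormula Δ} {x : ℕ} (hx : x ∈ φ.freeVars) :
    x ≤ φ.toMSOF.maxF := by
  induction φ with
  | _ => grind [freeVars, toMSOF, MSOF.maxF]

theorem holds_congr (nw : NestedWord Δ) (φ : FOFormula Δ) {γ γ' : ℕ → ℕ}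
    (h : ∀ x ∈ φ.freeVars, γ x = γ' x) : φ.Holds nw γ ↔ φ.Holds nw γ' := by
  induction φ generalizing γ γ' with
  | exF z φ ih =>
    refine exists_congr fun i => and_congr_right fun _ => ih fun x hx => ?_
    grind [freeVars, Function.update_apply]
  | not φ ih => exact not_congr (ih h)
  | and φ ψ ihφ ihψ =>
    exact and_congr (ihφ fun x hx => h x (Finset.mem_union_left _ hx))
      (ihψ fun x hx => h x (Finset.mem_union_right _ hx))
  | _ => simp_all [Holds, freeVars]

theorem holds_subst (nw : NestedWord Δ) {φ : FOFormula Δ} {x y : ℕ} (hy : φ.toMSOF.maxF < y)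
    (γ : ℕ → ℕ) : (φ.subst x y).Holds nw γ ↔ φ.Holds nw (Function.update γ x (γ y)) := by
  have hvar (γ : ℕ → ℕ) (u : ℕ) : γ (if u = x then y else u) = Function.update γ x (γ y) u := by
    grind [Function.update_apply]
  induction φ generalizing γ with
  | exF z φ ih =>
    simp only [toMSOF, MSOF.maxF, sup_lt_iff] at hy
    rw [subst]
    split_ifs with hz
    · subst hz
      simp [Holds]
    · refine exists_congr fun i => and_congr_right fun _ => ?_
      refine (ih hy.2 _).trans ?_
      rw [Function.update_of_ne hy.1.ne',
        Function.update_comm (Ne.symm hz)]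
  | not φ ih => exact not_congr (ih hy γ)
  | and φ ψ ihφ ihψ =>
    simp only [toMSOF, MSOF.maxF, sup_lt_iff] at hy
    exact and_congr (ihφ hy.1 γ) (ihψ hy.2 γ)
  | _ => simp only [Holds, subst, hvar]

end FOFormula

namespace WMSO

variable {K Δ : Type}

/-- Membership in `sRFO(K)` with all free variables first-order and taken from `V`. -/
structure IsSRFOOn (V : Finset ℕ) (φ : WMSO K Δ) : Prop where
  srfo : SRFO φ
  freeF_subset : φ.freeF ⊆ V
  freeS_eq : φ.freeS = ∅

namespace IsSRFOOn

variable {V W : Finset ℕ} {φ ψ : WMSO K Δ}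

theorem mono (h : IsSRFOOn V φ) (hVW : V ⊆ W) : IsSRFOOn W φ :=
  ⟨h.srfo, h.freeF_subset.trans hVW, h.freeS_eq⟩

theorem const (k : K) : IsSRFOOn V (.const k : WMSO K Δ) :=
  ⟨⟨trivial, trivial⟩, Finset.empty_subset _, rfl⟩

theorem and (hφ : IsSRFOOn V φ) (hψ : IsSRFOOn V ψ) : IsSRFOOn V (.and φ ψ) :=
  ⟨⟨⟨hφ.srfo.1, hψ.srfo.1⟩, ⟨hφ.srfo.2, hψ.srfo.2⟩⟩,
    Finset.union_subset hφ.freeF_subset hψ.freeF_subset, by simp [freeS, hφ.freeS_eq, hψ.freeS_eq]⟩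

theorem or (hφ : IsSRFOOn V φ) (hψ : IsSRFOOn V ψ) : IsSRFOOn V (.or φ ψ) :=
  ⟨⟨⟨hφ.srfo.1, hψ.srfo.1⟩, ⟨hφ.srfo.2, hψ.srfo.2⟩⟩,
    Finset.union_subset hφ.freeF_subset hψ.freeF_subset, by simp [freeS, hφ.freeS_eq, hψ.freeS_eq]⟩

theorem exF {x : ℕ} (hφ : IsSRFOOn (insert x V) φ) : IsSRFOOn V (.exF x φ) :=
  ⟨hφ.srfo, Finset.subset_insert_iff.1 hφ.freeF_subset, hφ.freeS_eq⟩

theorem alF {x : ℕ} (hφ : IsSRFOOn (insert x V) φ) (hu : AUMSO φ) : IsSRFOOn V (.alF x φ) :=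
  ⟨⟨⟨hu, hφ.srfo.1⟩, hφ.srfo.2⟩, Finset.subset_insert_iff.1 hφ.freeF_subset, hφ.freeS_eq⟩

theorem sentence (h : IsSRFOOn ∅ φ) : φ.Sentence :=
  ⟨Finset.subset_empty.1 h.freeF_subset, h.freeS_eq⟩

end IsSRFOOn

variable [CommSemiring K]

/-- `φ` is an `sRFO(K)` formula over the variables `V` whose semantics is the characteristic
series of `H`. -/
structure IsIndicator (V : Finset ℕ) (H : NestedWord Δ → (ℕ → ℕ) → Prop) (φ : WMSO K Δ) :
    Prop where
  isSRFOOn : IsSRFOOn V φ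
  sem_eq : ∀ nw γ₁ γ₂ [Decidable (H nw γ₁)], φ.sem nw γ₁ γ₂ = if H nw γ₁ then 1 else 0

namespace IsIndicator

variable {V : Finset ℕ} {H H' : NestedWord Δ → (ℕ → ℕ) → Prop} {φ φ' ψ : WMSO K Δ}

theorem of_sem_eq {_ : ∀ nw γ, Decidable (H nw γ)} (hφ : IsSRFOOn V φ)
    (h : ∀ nw γ₁ γ₂, φ.sem nw γ₁ γ₂ = if H nw γ₁ then 1 else 0) : IsIndicator V H φ :=
  ⟨hφ, fun nw γ₁ γ₂ _ => by
    rw [h]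
    congr⟩

theorem not_of_sem_eq {_ : ∀ nw γ, Decidable (H nw γ)} (hφ : IsSRFOOn V φ)
    (h : ∀ nw γ₁ γ₂, φ.sem nw γ₁ γ₂ = if H nw γ₁ then 0 else 1) :
    IsIndicator V (fun nw γ => ¬ H nw γ) φ :=
  .of_sem_eq hφ fun nw γ₁ γ₂ => (h nw γ₁ γ₂).trans (ite_not ..).symm

theorem congr (h : IsIndicator V H φ) (hH : ∀ nw γ, H nw γ ↔ H' nw γ) : IsIndicator V H' φ :=
  ⟨h.isSRFOOn, fun nw γ₁ γ₂ _ => by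
    classical
    rw [h.sem_eq]
    exact if_congr (hH nw γ₁) rfl rfl⟩

theorem mono {W : Finset ℕ} (h : IsIndicator V H φ) (hVW : V ⊆ W) : IsIndicator W H φ :=
  ⟨h.isSRFOOn.mono hVW, h.sem_eq⟩

theorem and (hφ : IsIndicator V H φ) (hψ : IsIndicator V H' ψ) :
    IsIndicator V (fun nw γ => H nw γ ∧ H' nw γ) (.and φ ψ) :=
  ⟨hφ.isSRFOOn.and hψ.isSRFOOn, fun nw γ₁ γ₂ _ => by
    classical
    rw [sem, hφ.sem_eq, hψ.sem_eq, ite_zero_mul_ite_zero, one_mul]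
    congr⟩

theorem or (hφ : IsIndicator V H φ) (hφ' : IsIndicator V (fun nw γ => ¬ H nw γ) φ')
    (hψ : IsIndicator V H' ψ) :
    IsIndicator V (fun nw γ => H nw γ ∨ H' nw γ) (.or φ (.and φ' ψ)) :=
  ⟨hφ.isSRFOOn.or (hφ'.isSRFOOn.and hψ.isSRFOOn), fun nw γ₁ γ₂ _ => by
    classical
    by_cases h : H nw γ₁ <;> simp [sem, hφ.sem_eq, hφ'.sem_eq, hψ.sem_eq, h]⟩

theorem alF {x : ℕ} (hφ : IsIndicator (insert x V) H φ) (hu : AUMSO φ) :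
    IsIndicator V (fun nw γ => ∀ i ∈ Finset.Icc 1 nw.len, H nw (Function.update γ x i))
      (.alF x φ) :=
  ⟨hφ.isSRFOOn.alF hu, fun nw γ₁ γ₂ _ => by
    classical
    simp only [sem, hφ.sem_eq, Finset.prod_ite_zero, Finset.prod_const_one]⟩

theorem exF_least {x y : ℕ} (hxy : x ≠ y) (hφ : IsIndicator (insert x V) H φ)
    (hψ : IsIndicator (insert y (insert x V)) H' ψ)
    (hu : AUMSO (.or (.lev x y) (.and (.nle x y) ψ)))
    (hH : ∀ nw γ i j, H' nw (Function.update (Function.update γ x i) y j) ↔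
      ¬ H nw (Function.update γ x j)) :
    IsIndicator V (fun nw γ => ∃ i ∈ Finset.Icc 1 nw.len, H nw (Function.update γ x i))
      (.exF x (.and φ (.alF y (.or (.lev x y) (.and (.nle x y) ψ))))) where
  isSRFOOn := by
    have hlev : IsSRFOOn (insert y (insert x V)) (.lev x y : WMSO K Δ) :=
      ⟨⟨trivial, trivial⟩, by grind [freeF], rfl⟩
    have hnle : IsSRFOOn (insert y (insert x V)) (.nle x y : WMSO K Δ) :=
      ⟨⟨trivial, trivial⟩, by grind [freeF], rfl⟩
    exact (hφ.isSRFOOn.and ((hlev.or (hnle.and hψ.isSRFOOn)).alF hu)).exF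
  sem_eq nw γ₁ γ₂ _ := by
    classical
    refine Eq.trans ?_ ((sum_indicator_least _ fun i => H nw (Function.update γ₁ x i)).trans
      (by congr))
    simp only [sem, hφ.sem_eq, hψ.sem_eq, hH, Function.update_self, Function.update_of_ne hxy,
      ite_not]

end IsIndicator

end WMSO

namespace FOFormula

variable {K Δ : Type} [CommSemiring K]

variable (K) in
/-- The formula has versions `φ⁺` and `φ⁻` in `sRFO(K)`, without new free variables, whose
semantics are the characteristic series of `L(φ)` and `L(¬φ)`. -/
def HasUnambVersions (φ : FOFormula Δ) : Prop :=
  (∃ a : WMSO K Δ, PlusOf K φ.toMSOF a ∧ a.IsIndicator φ.freeVars (φ.Holds ·)) ∧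
  ∃ b : WMSO K Δ, MinusOf K φ.toMSOF b ∧ b.IsIndicator φ.freeVars (¬ φ.Holds · ·)

theorem HasUnambVersions.not {φ : FOFormula Δ} (hφ : φ.HasUnambVersions K) :
    φ.not.HasUnambVersions K := by
  obtain ⟨⟨a, ha, ia⟩, ⟨b, hb, ib⟩⟩ := hφ
  exact ⟨⟨b, .not hb, ib⟩, ⟨a, .not ha, ia.congr fun _ _ => not_not.symm⟩⟩

theorem HasUnambVersions.and {φ ψ : FOFormula Δ} (hφ : φ.HasUnambVersions K)
    (hψ : ψ.HasUnambVersions K) : (φ.and ψ).HasUnambVersions K := by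
  obtain ⟨⟨a, ha, ia⟩, ⟨b, hb, ib⟩⟩ := hφ
  obtain ⟨⟨a', ha', ia'⟩, ⟨b', hb', ib'⟩⟩ := hψ
  have hl : φ.freeVars ⊆ (φ.and ψ).freeVars := Finset.subset_union_left
  have hr : ψ.freeVars ⊆ (φ.and ψ).freeVars := Finset.subset_union_right
  exact ⟨⟨_, .and ha ha', (ia.mono hl).and (ia'.mono hr)⟩, ⟨_, .and hb ha hb',
    ((ib.mono hl).or ((ia.mono hl).congr fun _ _ => not_not.symm) (ib'.mono hr)).congr
      fun _ _ => not_and_or.symm⟩⟩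

theorem HasUnambVersions.exF {φ : FOFormula Δ} {x : ℕ} (hφ : φ.HasUnambVersions K)
    (hφ' : (φ.subst x ((MSOF.exF x φ.toMSOF).maxF + 1)).HasUnambVersions K) :
    (φ.exF x).HasUnambVersions K := by
  obtain ⟨⟨a, ha, ia⟩, ⟨b, hb, ib⟩⟩ := hφ
  obtain ⟨-, ⟨c, hc, ic⟩⟩ := hφ'
  set y := (MSOF.exF x φ.toMSOF).maxF + 1 with hy
  obtain ⟨hxy, hφy⟩ : x < y ∧ φ.toMSOF.maxF < y := by simp [hy, MSOF.maxF]
  rw [toMSOF_subst] at hc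
  have hχ := MinusOf.and (.not (.lev (K := K) (Δ := Δ) x y)) (.not (.lev x y)) hc
  have hVx : φ.freeVars ⊆ insert x (φ.exF x).freeVars := Finset.insert_erase_subset _ _
  refine ⟨⟨_, .exF y hy ha hχ, ?_⟩, ⟨_, .exF hb, ?_⟩⟩
  · refine (ia.mono hVx).exF_least hxy.ne (ic.mono ?_) (.unamb ⟨_, .inr hχ⟩) ?_
    · exact (freeVars_subst_subset _ _ _).trans
        (Finset.insert_subset_insert _ (Finset.subset_insert _ _))
    · intro nw γ i j
      rw [holds_subst nw hφy]
      refine not_congr (holds_congr nw φ fun v hv => ?_)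
      have hvy : v ≠ y := ((le_maxF_of_mem_freeVars hv).trans_lt hφy).ne
      grind [Function.update_apply]
  · exact ((ib.mono hVx).alF (.unamb ⟨_, .inr hb⟩)).congr fun nw γ => by simp [Holds]

open WMSO in
theorem hasUnambVersions : ∀ φ : FOFormula Δ, φ.HasUnambVersions K
  | .eqv x y => ⟨⟨_, .eqv x y, .of_sem_eq ⟨⟨trivial, trivial⟩, subset_rfl, rfl⟩ fun _ _ _ => rfl⟩,
      ⟨_, .eqv x y, .not_of_sem_eq ⟨⟨trivial, trivial⟩, subset_rfl, rfl⟩ fun _ _ _ => rfl⟩⟩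
  | .lab a x => ⟨⟨_, .lab a x, .of_sem_eq ⟨⟨trivial, trivial⟩, subset_rfl, rfl⟩ fun _ _ _ => rfl⟩,
      ⟨_, .lab a x, .not_of_sem_eq ⟨⟨trivial, trivial⟩, subset_rfl, rfl⟩ fun _ _ _ => rfl⟩⟩
  | .lev x y => ⟨⟨_, .lev x y, .of_sem_eq ⟨⟨trivial, trivial⟩, subset_rfl, rfl⟩ fun _ _ _ => rfl⟩,
      ⟨_, .lev x y, .not_of_sem_eq ⟨⟨trivial, trivial⟩, subset_rfl, rfl⟩ fun _ _ _ => rfl⟩⟩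
  | .nuv x y => ⟨⟨_, .nuv x y, .of_sem_eq ⟨⟨trivial, trivial⟩, subset_rfl, rfl⟩ fun _ _ _ => rfl⟩,
      ⟨_, .nuv x y, .not_of_sem_eq ⟨⟨trivial, trivial⟩, subset_rfl, rfl⟩ fun _ _ _ => rfl⟩⟩
  | .not φ => φ.hasUnambVersions.not
  | .and φ ψ => φ.hasUnambVersions.and ψ.hasUnambVersions
  | .exF _ φ => .exF φ.hasUnambVersions (hasUnambVersions _)
termination_by φ => φ.size
decreasing_by all_goals simp only [size, size_subst]; omega

end FOFormula

/-! ### Noncommutative polynomials and the words occurring in them -/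

section WordSpan

variable (K : Type) [CommSemiring K] {A B : Type}

/-- The word `u` as a monomial of the polynomial semiring `K⟨A⟩ = FreeAlgebra K A`. -/
def wordMonomial (u : List A) : FreeAlgebra K A := (u.map (FreeAlgebra.ι K)).prod

/-- The polynomials all of whose words lie in `C`. -/
def wordSpan (C : Set (List A)) : Submodule K (FreeAlgebra K A) :=
  Submodule.span K (wordMonomial K '' C)

theorem wordMonomial_append (u v : List A) :
    wordMonomial K (u ++ v) = wordMonomial K u * wordMonomial K v := by
  simp only [wordMonomial, List.map_append, List.prod_append]

theorem wordMonomial_singleton (a : A) : wordMonomial K [a] = FreeAlgebra.ι K a :=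
  List.prod_singleton

theorem star_wordMonomial (u : List A) :
    star (wordMonomial K u) = wordMonomial K u.reverse := by
  induction u with
  | nil => exact star_one _
  | cons a u ih =>
    rw [List.reverse_cons, wordMonomial_append, wordMonomial_singleton, ← ih, wordMonomial,
      List.map_cons, List.prod_cons, star_mul, FreeAlgebra.star_ι, wordMonomial]

variable {K}

theorem lift_wordMonomial {R : Type*} [Semiring R] [Algebra K R] (g : A → R) (u : List A) :
    FreeAlgebra.lift K g (wordMonomial K u) = (u.map g).prod := by
  simp only [wordMonomial, map_list_prod, List.map_map, Function.comp_def,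
    FreeAlgebra.lift_ι_apply]

theorem lift_ι_comp_wordMonomial (f : A → B) (u : List A) :
    FreeAlgebra.lift K (FreeAlgebra.ι K ∘ f) (wordMonomial K u) = wordMonomial K (u.map f) := by
  rw [lift_wordMonomial, wordMonomial, List.map_map]

theorem wordMonomial_mem_wordSpan {C : Set (List A)} {u : List A} (hu : u ∈ C) :
    wordMonomial K u ∈ wordSpan K C :=
  Submodule.subset_span ⟨u, hu, rfl⟩

theorem ι_mem_wordSpan {C : Set (List A)} {a : A} (ha : [a] ∈ C) :
    FreeAlgebra.ι K a ∈ wordSpan K C :=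
  wordMonomial_singleton K a ▸ wordMonomial_mem_wordSpan ha

theorem wordSpan_mono {C D : Set (List A)} (h : C ⊆ D) : wordSpan K C ≤ wordSpan K D :=
  Submodule.span_mono (Set.image_mono h)

theorem wordSpan_union (C D : Set (List A)) :
    wordSpan K (C ∪ D) = wordSpan K C ⊔ wordSpan K D := by
  rw [wordSpan, Set.image_union, Submodule.span_union, wordSpan, wordSpan]

theorem map_mem_of_mem_wordSpan {M : Type*} [AddCommMonoid M] [Module K M]
    (f : FreeAlgebra K A →ₗ[K] M) {C : Set (List A)} {N : Submodule K M} {p : FreeAlgebra K A}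
    (hp : p ∈ wordSpan K C) (h : ∀ u ∈ C, f (wordMonomial K u) ∈ N) : f p ∈ N := by
  have hle : wordSpan K C ≤ N.comap f :=
    Submodule.span_le.2 (Set.forall_mem_image.2 h)
  exact hle hp

theorem mul_mem_wordSpan {C D E : Set (List A)} {p q : FreeAlgebra K A}
    (hp : p ∈ wordSpan K C) (hq : q ∈ wordSpan K D) (h : ∀ u ∈ C, ∀ v ∈ D, u ++ v ∈ E) :
    p * q ∈ wordSpan K E := by
  have hpq := Submodule.mul_mem_mul hp hq
  rw [wordSpan, wordSpan, Submodule.span_mul_span] at hpq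
  refine Submodule.span_mono ?_ hpq
  rintro _ ⟨_, ⟨u, hu, rfl⟩, _, ⟨v, hv, rfl⟩, rfl⟩
  exact ⟨u ++ v, h u hu v hv, wordMonomial_append K u v⟩

theorem mem_wordSpan_univ (p : FreeAlgebra K A) : p ∈ wordSpan K (Set.univ : Set (List A)) := by
  induction p using FreeAlgebra.induction with
  | grade0 k =>
    rw [Algebra.algebraMap_eq_smul_one]
    exact Submodule.smul_mem _ k (wordMonomial_mem_wordSpan (u := []) trivial)
  | grade1 a => exact ι_mem_wordSpan trivial
  | mul p q hp hq => exact mul_mem_wordSpan hp hq fun _ _ _ _ => Set.mem_univ _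
  | add p q hp hq => exact add_mem hp hq

theorem lift_ι_comp_mem_wordSpan {f : A → B} {C : Set (List A)} {D : Set (List B)}
    {p : FreeAlgebra K A} (hp : p ∈ wordSpan K C) (h : ∀ u ∈ C, u.map f ∈ D) :
    FreeAlgebra.lift K (FreeAlgebra.ι K ∘ f) p ∈ wordSpan K D := by
  refine map_mem_of_mem_wordSpan (FreeAlgebra.lift K (FreeAlgebra.ι K ∘ f)).toLinearMap hp
    fun u hu => ?_
  rw [AlgHom.toLinearMap_apply, lift_ι_comp_wordMonomial]
  exact wordMonomial_mem_wordSpan (h u hu)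

theorem star_mem_wordSpan {C D : Set (List A)} {p : FreeAlgebra K A}
    (hp : p ∈ wordSpan K C) (h : ∀ u ∈ C, u.reverse ∈ D) : star p ∈ wordSpan K D := by
  let f : FreeAlgebra K A →ₗ[K] FreeAlgebra K A :=
    (MulOpposite.opLinearEquiv K).symm.toLinearMap ∘ₗ FreeAlgebra.starHom.toLinearMap
  refine map_mem_of_mem_wordSpan f hp fun u hu => ?_
  change star (wordMonomial K u) ∈ _
  exact star_wordMonomial K u ▸ wordMonomial_mem_wordSpan (h u hu)

theorem lift_star {R : Type*} [Semiring R] [Algebra K R] (g : A → R) (p : FreeAlgebra K A) :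
    FreeAlgebra.lift K g (star p) =
      (FreeAlgebra.lift K (MulOpposite.op ∘ g) p).unop := by
  have h : (FreeAlgebra.lift K g).op.comp (FreeAlgebra.starHom (R := K) (X := A)).toAlgHom =
      FreeAlgebra.lift K (MulOpposite.op ∘ g) := by
    refine FreeAlgebra.hom_ext (funext fun a => ?_)
    change MulOpposite.op (FreeAlgebra.lift K g (star (FreeAlgebra.ι K a))) = _
    simp
  exact congrArg MulOpposite.unop (DFunLike.congr_fun h p)

end WordSpan

section Words

variable (Δ Y : Type)

/-- The terminal letters. -/
def letters : Set (Δ ⊕ Y) := Set.range Sum.inl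

variable {Δ Y}

/-- The words admitted by proper systems: neither empty nor a single variable. -/
def properWords (Δ Y : Type) : Set (List (Δ ⊕ Y)) := {u | u ≠ [] ∧ ∀ y, u ≠ [Sum.inr y]}

/-- The words whose first symbol belongs to `H`. -/
def startsIn {A : Type} (H : Set A) : Set (List A) := {u | ∃ s ∈ H, ∃ v, u = s :: v}

/-- The words whose last symbol belongs to `H`. -/
def endsIn {A : Type} (H : Set A) : Set (List A) := {u | ∃ s ∈ H, ∃ v, u = v ++ [s]}

theorem append_mem_startsIn {A : Type} {H : Set A} {u v : List A} (hu : u ∈ startsIn H) :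
    u ++ v ∈ startsIn H := by
  obtain ⟨s, hs, t, rfl⟩ := hu
  exact ⟨s, hs, t ++ v, rfl⟩

theorem map_mem_startsIn {A B : Type} {H : Set A} {u : List A} (f : A → B)
    (hu : u ∈ startsIn H) : u.map f ∈ startsIn (f '' H) := by
  obtain ⟨s, hs, t, rfl⟩ := hu
  exact ⟨f s, ⟨s, hs, rfl⟩, t.map f, rfl⟩

theorem append_mem_endsIn {A : Type} {H : Set A} {u v : List A} (hv : v ∈ endsIn H) :
    u ++ v ∈ endsIn H := by
  obtain ⟨s, hs, t, rfl⟩ := hv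
  exact ⟨s, hs, u ++ t, (List.append_assoc _ _ _).symm⟩

theorem reverse_mem_startsIn {A : Type} {H : Set A} {u : List A} (hu : u ∈ endsIn H) :
    u.reverse ∈ startsIn H := by
  obtain ⟨s, hs, t, rfl⟩ := hu
  exact ⟨s, hs, t.reverse, List.reverse_concat⟩

theorem reverse_mem_endsIn {A : Type} {H : Set A} {u : List A} (hu : u ∈ startsIn H) :
    u.reverse ∈ endsIn H := by
  obtain ⟨s, hs, t, rfl⟩ := hu
  exact ⟨s, hs, t.reverse, List.reverse_cons⟩

theorem nil_notMem_startsIn {A : Type} (H : Set A) : [] ∉ startsIn H := by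
  rintro ⟨s, -, v, h⟩
  exact List.cons_ne_nil s v h.symm

theorem mem_properWords_of_mem_startsIn {u : List (Δ ⊕ Y)} (hu : u ∈ startsIn (letters Δ Y)) :
    u ∈ properWords Δ Y := by
  obtain ⟨_, ⟨a, rfl⟩, v, rfl⟩ := hu
  simp [properWords]

variable {K : Type} [CommSemiring K] [Fintype Y]

theorem exists_eq_add_sum_mul_ι {C : Set (List (Δ ⊕ Y))} (hC : [] ∉ C)
    {p : FreeAlgebra K (Δ ⊕ Y)} (hp : p ∈ wordSpan K C) :
    ∃ t ∈ wordSpan K (C ∩ endsIn (letters Δ Y)), ∃ r : Y → FreeAlgebra K (Δ ⊕ Y),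
      (∀ y, r y ∈ wordSpan K {u | u ++ [Sum.inr y] ∈ C}) ∧
      p = t + ∑ y, r y * FreeAlgebra.ι K (Sum.inr y) := by
  classical
  induction hp using Submodule.span_induction with
  | mem p hp =>
    obtain ⟨u, hu, rfl⟩ := hp
    rcases List.eq_nil_or_concat' u with rfl | ⟨v, a | y, rfl⟩
    · exact absurd hu hC
    · exact ⟨_, wordMonomial_mem_wordSpan ⟨hu, _, ⟨a, rfl⟩, v, rfl⟩, 0,
        fun _ => zero_mem _, by simp⟩
    · refine ⟨0, zero_mem _, Pi.single y (wordMonomial K v), fun z => ?_, ?_⟩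
      · rcases eq_or_ne z y with rfl | hz
        · rw [Pi.single_eq_same]
          exact wordMonomial_mem_wordSpan hu
        · rw [Pi.single_eq_of_ne hz]
          exact zero_mem _
      · simp [Pi.single_apply, wordMonomial_append, wordMonomial_singleton]
  | zero => exact ⟨0, zero_mem _, 0, fun _ => zero_mem _, by simp⟩
  | add p q _ _ ihp ihq =>
    obtain ⟨t, ht, r, hr, rfl⟩ := ihp
    obtain ⟨t', ht', r', hr', rfl⟩ := ihq
    refine ⟨t + t', add_mem ht ht', r + r', fun y => add_mem (hr y) (hr' y), ?_⟩
    simp only [Pi.add_apply, add_mul, Finset.sum_add_distrib, add_add_add_comm]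
  | smul c p _ ih =>
    obtain ⟨t, ht, r, hr, rfl⟩ := ih
    refine ⟨c • t, Submodule.smul_mem _ c ht, c • r,
      fun y => Submodule.smul_mem _ c (hr y), ?_⟩
    simp only [Pi.smul_apply, smul_mul_assoc, smul_add, Finset.smul_sum]

end Words

/-! ### Greibach normal form over nilpotent ideals -/

theorem eq_geom_sum_mulVec_add {R Y : Type*} [Semiring R] [Fintype Y] [DecidableEq Y]
    {M : Matrix Y Y R} {b V : Y → R} (hV : V = b + M.mulVec V) (n : ℕ) :
    V = (∑ i ∈ Finset.range n, M ^ i).mulVec b + (M ^ n).mulVec V := by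
  induction n with
  | zero => simp
  | succ n ih =>
    have hpow : (M ^ n).mulVec V = (M ^ n).mulVec b + (M ^ (n + 1)).mulVec V := by
      conv_lhs => rw [hV, Matrix.mulVec_add, Matrix.mulVec_mulVec, ← pow_succ]
    rw [Finset.sum_range_succ, Matrix.add_mulVec, add_assoc, ← hpow, ← ih]

section NilpotentIdeal

variable {K R : Type} [CommSemiring K] [Semiring R] [Algebra K R]

/-- A nilpotent two-sided ideal. Restricting the solutions of algebraic systems to such an ideal
replaces the convergence of formal power series. -/
structure IsNilpotentIdeal (I : Submodule K R) : Prop where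
  mul_mem_left : ∀ (a : R) {b : R}, b ∈ I → a * b ∈ I
  mul_mem_right : ∀ {a : R} (b : R), a ∈ I → a * b ∈ I
  isNilpotent : IsNilpotent I

theorem IsNilpotentIdeal.op {I : Submodule K R} (hI : IsNilpotentIdeal I) :
    IsNilpotentIdeal (I.comap (MulOpposite.opLinearEquiv K).symm.toLinearMap) where
  mul_mem_left a _ hb := hI.mul_mem_right a.unop hb
  mul_mem_right b ha := hI.mul_mem_left b.unop ha
  isNilpotent := by
    obtain ⟨n, hn⟩ := hI.isNilpotent
    refine ⟨n, ?_⟩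
    rw [← Submodule.comap_unop_pow, hn]
    ext a
    exact MulOpposite.unop_eq_zero_iff a

theorem IsNilpotentIdeal.lift_mem {A : Type} {I : Submodule K R} (hI : IsNilpotentIdeal I)
    {g : A → R} (hg : ∀ a, g a ∈ I) {C : Set (List A)} (hC : [] ∉ C) {p : FreeAlgebra K A}
    (hp : p ∈ wordSpan K C) : FreeAlgebra.lift K g p ∈ I := by
  refine map_mem_of_mem_wordSpan (FreeAlgebra.lift K g).toLinearMap hp fun u hu => ?_
  rw [AlgHom.toLinearMap_apply, lift_wordMonomial]
  cases u with
  | nil => exact absurd hu hC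
  | cons a u =>
    rw [List.map_cons, List.prod_cons]
    exact hI.mul_mem_right _ (hg a)

variable {Y : Type} [Fintype Y]

theorem matrix_pow_mem [DecidableEq Y] {I : Submodule K R} {M : Matrix Y Y R}
    (hM : ∀ x y, M x y ∈ I) (n : ℕ) (x y : Y) : (M ^ n) x y ∈ I ^ n := by
  induction n generalizing y with
  | zero =>
    rw [pow_zero, pow_zero, Matrix.one_apply]
    split_ifs
    exacts [Submodule.one_le.1 le_rfl, zero_mem _]
  | succ n ih =>
    rw [pow_succ, pow_succ, Matrix.mul_apply]
    exact sum_mem fun z _ => Submodule.mul_mem_mul (ih z) (hM z y)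

theorem IsNilpotentIdeal.exists_quasiInverse {I : Submodule K R} (hI : IsNilpotentIdeal I)
    {M : Matrix Y Y R} (hM : ∀ x y, M x y ∈ I) :
    ∃ L : Matrix Y Y R, (∀ x y, L x y ∈ I) ∧ L = M + M * L ∧ L = M + L * M ∧
      ∀ b V : Y → R, V = b + M.mulVec V → V = b + L.mulVec b := by
  classical
  obtain ⟨n, hn⟩ := hI.isNilpotent
  have hMn : M ^ n = 0 := by
    ext x y
    have h := matrix_pow_mem hM n x y
    rw [hn] at h
    exact h
  set G := ∑ i ∈ Finset.range n, M ^ i with hG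
  have hl : M * G + 1 = G := by
    rw [hG, ← geom_sum_succ, Finset.sum_range_succ, hMn, add_zero]
  have hcomm : M * G = G * M := (Commute.sum_right _ _ _ fun i _ => Commute.self_pow M i).eq
  refine ⟨M * G, fun x y => ?_, ?_, ?_, fun b V hV => ?_⟩
  · rw [Matrix.mul_apply]
    exact sum_mem fun z _ => hI.mul_mem_right _ (hM x z)
  · conv_lhs => rw [← hl, mul_add, mul_one, add_comm]
  · conv_lhs => rw [← hl, mul_add, mul_one, add_comm, hcomm, ← mul_assoc]
  · have h := eq_geom_sum_mulVec_add hV n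
    rw [hMn, Matrix.zero_mulVec, add_zero, ← hG] at h
    conv_lhs => rw [h, ← hl, Matrix.add_mulVec, Matrix.one_mulVec, add_comm]

end NilpotentIdeal

section GreibachMatrices

variable {R R' Y : Type*} [Semiring R] [Semiring R'] [Fintype Y]

/-- `b + M b + M L b`: the solution of `V = b + M V` when `L` is the quasi-inverse of `M`, written
so that every summand starts with `b` or `M` and ends with `b`. -/
def greibachVec (b : Y → R) (M L : Matrix Y Y R) : Y → R :=
  b + M.mulVec b + M.mulVec (L.mulVec b)

/-- `F + M F + M L F`: for `F = M` this is the quasi-inverse `L` of `M`. -/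
def greibachMat (M L F : Matrix Y Y R) : Matrix Y Y R := F + M * F + M * (L * F)

theorem map_greibachVec (f : R →+* R') (b : Y → R) (M L : Matrix Y Y R) (x : Y) :
    f (greibachVec b M L x) = greibachVec (f ∘ b) (M.map f) (L.map f) x := by
  simp only [greibachVec, Pi.add_apply, map_add, RingHom.map_mulVec, Function.comp_def]

theorem map_greibachMat (f : R →+* R') (M L F : Matrix Y Y R) (x y : Y) :
    f (greibachMat M L F x y) = greibachMat (M.map f) (L.map f) (F.map f) x y := by
  simp only [greibachMat, Matrix.add_apply, map_add, RingHom.map_matrix_mul, Matrix.map_mul,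
    Matrix.map_apply]

theorem greibachVec_eq {M L : Matrix Y Y R} (hL : L = M + M * L) (b : Y → R) :
    greibachVec b M L = b + L.mulVec b := by
  rw [greibachVec, Matrix.mulVec_mulVec, add_assoc, ← Matrix.add_mulVec, ← hL]

theorem greibachMat_self {M L : Matrix Y Y R} (hL : L = M + M * L) (hL' : L = M + L * M) :
    greibachMat M L M = L := by
  rw [greibachMat, add_assoc, ← mul_add, ← hL', ← hL]

end GreibachMatrices

section Greibach

variable {K Δ Y Z W : Type} [CommSemiring K]

/-- `V` solves the algebraic system `P` when the letters are interpreted by `α`. -/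
def Solves {R : Type} [Semiring R] [Algebra K R] (P : Y → FreeAlgebra K (Δ ⊕ Y)) (α : Δ → R)
    (V : Y → R) : Prop :=
  ∀ y, V y = FreeAlgebra.lift K (Sum.elim α V) (P y)

/-- Every solution of `P` in a nilpotent ideal extends along `e` to a solution of `P'`. -/
def Simulates (P : Y → FreeAlgebra K (Δ ⊕ Y)) (P' : Z → FreeAlgebra K (Δ ⊕ Z)) (e : Y → Z) :
    Prop :=
  ∀ (R : Type) [Semiring R] [Algebra K R] (I : Submodule K R), IsNilpotentIdeal I →
    ∀ (α : Δ → R) (V : Y → R), (∀ a, α a ∈ I) → (∀ y, V y ∈ I) → Solves P α V →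
      ∃ V' : Z → R, (∀ z, V' z ∈ I) ∧ Solves P' α V' ∧ V' ∘ e = V

theorem Simulates.trans {P : Y → FreeAlgebra K (Δ ⊕ Y)} {P' : Z → FreeAlgebra K (Δ ⊕ Z)}
    {P'' : W → FreeAlgebra K (Δ ⊕ W)} {e : Y → Z} {e' : Z → W} (h : Simulates P P' e)
    (h' : Simulates P' P'' e') : Simulates P P'' (e' ∘ e) := by
  intro R _ _ I hI α V hα hV hP
  obtain ⟨V', hV', hP', rfl⟩ := h R I hI α V hα hV hP
  obtain ⟨V'', hV'', hP'', rfl⟩ := h' R I hI α V' hα hV' hP'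
  exact ⟨V'', hV'', hP'', rfl⟩

theorem solves_star_iff {R : Type} [Semiring R] [Algebra K R] {P : Y → FreeAlgebra K (Δ ⊕ Y)}
    {α : Δ → R} {V : Y → R} :
    Solves (star P) α V ↔ Solves P (MulOpposite.op ∘ α) (MulOpposite.op ∘ V) := by
  refine forall_congr' fun y => ?_
  rw [Pi.star_apply, lift_star, Sum.comp_elim, ← MulOpposite.op_inj, MulOpposite.op_unop,
    Function.comp_apply]

theorem Simulates.star {P : Y → FreeAlgebra K (Δ ⊕ Y)} {P' : Z → FreeAlgebra K (Δ ⊕ Z)}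
    {e : Y → Z} (h : Simulates P P' e) : Simulates (star P) (star P') e := by
  intro R _ _ I hI α V hα hV hP
  obtain ⟨V', hV', hP', hV'e⟩ := h Rᵐᵒᵖ _ hI.op _ _ hα hV (solves_star_iff.1 hP)
  refine ⟨MulOpposite.unop ∘ V', hV', solves_star_iff.2 hP', ?_⟩
  rw [Function.comp_assoc, hV'e]
  rfl

theorem mul_mem_wordSpan_endsIn {E : Set Δ} (p : FreeAlgebra K Δ) {q : FreeAlgebra K Δ}
    (hq : q ∈ wordSpan K (endsIn E)) : p * q ∈ wordSpan K (endsIn E) :=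
  mul_mem_wordSpan (mem_wordSpan_univ p) hq fun _ _ _ hv => append_mem_endsIn hv

theorem mul_mem_wordSpan_inter {H E : Set Δ} {p q : FreeAlgebra K Δ}
    (hp : p ∈ wordSpan K (startsIn H)) (hq : q ∈ wordSpan K (endsIn E)) :
    p * q ∈ wordSpan K (startsIn H ∩ endsIn E) :=
  mul_mem_wordSpan hp hq fun _ hu _ hv => ⟨append_mem_startsIn hu, append_mem_endsIn hv⟩

/-- The polynomial `p`, read over the larger set of variables `Y ⊕ Y × Y`. -/
noncomputable def extendVars :
    FreeAlgebra K (Δ ⊕ Y) →ₐ[K] FreeAlgebra K (Δ ⊕ (Y ⊕ Y × Y)) :=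
  FreeAlgebra.lift K (FreeAlgebra.ι K ∘ Sum.map id Sum.inl)

theorem lift_extendVars {R : Type} [Semiring R] [Algebra K R] (α : Δ → R) (V : Y → R)
    (V' : Y × Y → R) (p : FreeAlgebra K (Δ ⊕ Y)) :
    FreeAlgebra.lift K (Sum.elim α (Sum.elim V V')) (extendVars p) =
      FreeAlgebra.lift K (Sum.elim α V) p := by
  rw [extendVars, ← AlgHom.comp_apply]
  congr 1
  refine FreeAlgebra.hom_ext (funext ?_)
  rintro (a | y) <;> simp

theorem greibachVec_mem_wordSpan [Fintype Y] {A : Type} {H E : Set A} {b : Y → FreeAlgebra K A}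
    {M : Matrix Y Y (FreeAlgebra K A)} (L : Matrix Y Y (FreeAlgebra K A))
    (hb : ∀ y, b y ∈ wordSpan K (startsIn H ∩ endsIn E))
    (hM : ∀ x y, M x y ∈ wordSpan K (startsIn H)) (x : Y) :
    greibachVec b M L x ∈ wordSpan K (startsIn H ∩ endsIn E) := by
  have hbE y : b y ∈ wordSpan K (endsIn E) := wordSpan_mono Set.inter_subset_right (hb y)
  refine add_mem (add_mem (hb x) ?_) ?_
  · exact sum_mem fun y _ => mul_mem_wordSpan_inter (hM x y) (hbE y)
  · exact sum_mem fun y _ => mul_mem_wordSpan_inter (hM x y)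
      (sum_mem fun z _ => mul_mem_wordSpan_endsIn _ (hbE z))

theorem greibachMat_mem_wordSpan [Fintype Y] {A : Type} {H E : Set A}
    {M F : Matrix Y Y (FreeAlgebra K A)} (L : Matrix Y Y (FreeAlgebra K A))
    (hM : ∀ x y, M x y ∈ wordSpan K (startsIn H))
    (hF : ∀ x y, F x y ∈ wordSpan K (startsIn H ∩ endsIn E)) (x y : Y) :
    greibachMat M L F x y ∈ wordSpan K (startsIn H ∩ endsIn E) :=
  greibachVec_mem_wordSpan L (fun z => hF z y) hM x

/-- The right Greibach form of the system `V = t + r V` in which the words of `t` end with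
letters. The new variables `Y × Y` stand for the quasi-inverse of the matrix `r`, whose entries are
in turn split as `r x y = t' x y + ∑ v, r' x y v * v`. -/
noncomputable def greibachSystem [Fintype Y] (t : Y → FreeAlgebra K (Δ ⊕ Y))
    (r t' : Y → Y → FreeAlgebra K (Δ ⊕ Y)) (r' : Y → Y → Y → FreeAlgebra K (Δ ⊕ Y)) :
    Y ⊕ Y × Y → FreeAlgebra K (Δ ⊕ (Y ⊕ Y × Y)) :=
  let M : Matrix Y Y _ := .of fun x y => extendVars (r x y)
  let L : Matrix Y Y _ := .of fun x y => FreeAlgebra.ι K (Sum.inr (Sum.inr (x, y)))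
  let A := greibachVec (extendVars ∘ t) M L
  let F : Matrix Y Y _ := .of fun x y =>
    extendVars (t' x y) + ∑ v, extendVars (r' x y v) * A v
  Sum.elim A fun z => greibachMat M L F z.1 z.2

section LiftGreibachSystem

variable {R : Type} [Semiring R] [Algebra K R] [Fintype Y] (α : Δ → R) (V : Y → R) (V' : Y × Y → R)
  (t : Y → FreeAlgebra K (Δ ⊕ Y)) (r t' : Y → Y → FreeAlgebra K (Δ ⊕ Y))
  (r' : Y → Y → Y → FreeAlgebra K (Δ ⊕ Y))

theorem lift_greibachSystem_inl (x : Y) :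
    FreeAlgebra.lift K (Sum.elim α (Sum.elim V V')) (greibachSystem t r t' r' (Sum.inl x)) =
      greibachVec (FreeAlgebra.lift K (Sum.elim α V) ∘ t)
        (.of fun x y => FreeAlgebra.lift K (Sum.elim α V) (r x y)) (.of V'.curry) x := by
  refine (map_greibachVec (FreeAlgebra.lift K _).toRingHom _ _ _ x).trans ?_
  congr 1
  · exact funext fun y => lift_extendVars α V V' (t y)
  · ext x y
    exact lift_extendVars α V V' (r x y)
  · ext x y
    simp

theorem lift_greibachSystem_inr (x y : Y) :
    FreeAlgebra.lift K (Sum.elim α (Sum.elim V V')) (greibachSystem t r t' r' (Sum.inr (x, y))) =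
      greibachMat (.of fun x y => FreeAlgebra.lift K (Sum.elim α V) (r x y)) (.of V'.curry)
        (.of fun x y => FreeAlgebra.lift K (Sum.elim α V) (t' x y) +
          ∑ v, FreeAlgebra.lift K (Sum.elim α V) (r' x y v) *
            FreeAlgebra.lift K (Sum.elim α (Sum.elim V V'))
              (greibachSystem t r t' r' (Sum.inl v))) x y := by
  refine (map_greibachMat (FreeAlgebra.lift K _).toRingHom _ _ _ x y).trans ?_
  congr 1
  · ext x y
    exact lift_extendVars α V V' (r x y)
  · ext x y
    simp
  · ext x y
    refine (map_add (FreeAlgebra.lift K _) _ _).trans ?_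
    rw [map_sum, lift_extendVars]
    simp only [map_mul, lift_extendVars]
    rfl

end LiftGreibachSystem

theorem simulates_greibachSystem [Fintype Y] {P t : Y → FreeAlgebra K (Δ ⊕ Y)}
    {r t' : Y → Y → FreeAlgebra K (Δ ⊕ Y)} {r' : Y → Y → Y → FreeAlgebra K (Δ ⊕ Y)}
    (hP : ∀ x, P x = t x + ∑ y, r x y * FreeAlgebra.ι K (Sum.inr y))
    (hr : ∀ x y, r x y = t' x y + ∑ v, r' x y v * FreeAlgebra.ι K (Sum.inr v))
    (hr₀ : ∀ x y, r x y ∈ wordSpan K {u | u ≠ []}) :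
    Simulates P (greibachSystem t r t' r') Sum.inl := by
  intro R _ _ I hI α V hα hV hsol
  set ψ := FreeAlgebra.lift K (Sum.elim α V) with hψ
  let M : Matrix Y Y R := .of fun x y => ψ (r x y)
  have hgI s : Sum.elim α V s ∈ I := Sum.rec hα hV s
  obtain ⟨L, hLI, hL, hL', hquasi⟩ :=
    hI.exists_quasiInverse (M := M) fun x y =>
      hI.lift_mem hgI (C := {u | u ≠ []}) (fun h => h rfl) (hr₀ x y)
  have hVM : V = ψ ∘ t + M.mulVec V := by
    funext x
    rw [hsol x, ← hψ, hP, map_add, map_sum]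
    simp [M, hψ, Matrix.mulVec, dotProduct]
  have hvec : greibachVec (ψ ∘ t) M L = V := (greibachVec_eq hL _).trans (hquasi _ _ hVM).symm
  have hA x : FreeAlgebra.lift K (Sum.elim α (Sum.elim V fun z => L z.1 z.2))
      (greibachSystem t r t' r' (Sum.inl x)) = V x :=
    (lift_greibachSystem_inl α V _ t r t' r' x).trans (congrFun hvec x)
  have hF : (Matrix.of fun x y => ψ (t' x y) + ∑ v, ψ (r' x y v) * V v) = M := by
    ext x y
    simp [M, hr x y, hψ]
  refine ⟨Sum.elim V fun z => L z.1 z.2, Sum.rec hV fun z => hLI z.1 z.2, ?_, rfl⟩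
  rintro (x | ⟨x, y⟩)
  · exact (hA x).symm
  · rw [lift_greibachSystem_inr]
    simp only [hA]
    rw [← hψ, hF]
    exact (congrFun₂ (greibachMat_self hL hL') x y).symm

theorem greibachSystem_mem_wordSpan [Fintype Y] {H : Set (Δ ⊕ Y)} {t : Y → FreeAlgebra K (Δ ⊕ Y)}
    {r t' : Y → Y → FreeAlgebra K (Δ ⊕ Y)} {r' : Y → Y → Y → FreeAlgebra K (Δ ⊕ Y)}
    (ht : ∀ x, t x ∈ wordSpan K (startsIn H ∩ endsIn (letters Δ Y)))
    (hr : ∀ x y, r x y ∈ wordSpan K (startsIn H))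
    (ht' : ∀ x y, t' x y ∈ wordSpan K (startsIn H ∩ endsIn (letters Δ Y)))
    (hr' : ∀ x y v, r' x y v ∈ wordSpan K {u | u ++ [Sum.inr v] ∈ startsIn H})
    (z : Y ⊕ Y × Y) :
    greibachSystem t r t' r' z ∈
      wordSpan K (startsIn (Sum.map id Sum.inl '' H) ∩ endsIn (letters Δ _)) := by
  set f : Δ ⊕ Y → Δ ⊕ (Y ⊕ Y × Y) := Sum.map id Sum.inl
  have hext {p : FreeAlgebra K (Δ ⊕ Y)}
      (hp : p ∈ wordSpan K (startsIn H ∩ endsIn (letters Δ Y))) :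
      extendVars p ∈ wordSpan K (startsIn (f '' H) ∩ endsIn (letters Δ _)) := by
    refine lift_ι_comp_mem_wordSpan hp fun u hu => ⟨map_mem_startsIn f hu.1, ?_⟩
    obtain ⟨-, _, ⟨a, rfl⟩, v, rfl⟩ := hu
    exact ⟨_, ⟨a, rfl⟩, v.map f, List.map_append⟩
  have hM x y : extendVars (r x y) ∈ wordSpan K (startsIn (f '' H)) :=
    lift_ι_comp_mem_wordSpan (hr x y) fun u hu => map_mem_startsIn f hu
  have hA x : greibachSystem t r t' r' (Sum.inl x) ∈
      wordSpan K (startsIn (f '' H) ∩ endsIn (letters Δ _)) :=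
    greibachVec_mem_wordSpan _ (fun y => hext (ht y)) hM x
  rcases z with x | ⟨x, y⟩
  · exact hA x
  refine greibachMat_mem_wordSpan _ hM (fun x y => add_mem (hext (ht' x y)) ?_) x y
  have hr'f v : extendVars (r' x y v) ∈
      wordSpan K {u | u ++ [f (Sum.inr v)] ∈ startsIn (f '' H)} := by
    refine lift_ι_comp_mem_wordSpan (hr' x y v) fun u hu => ?_
    have h := map_mem_startsIn f hu
    rwa [List.map_append] at h
  refine sum_mem fun v _ => mul_mem_wordSpan (hr'f v) (hA v) ?_
  rintro (_ | ⟨s, u⟩) hu w hw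
  · exact hw
  · obtain ⟨s', hs, w', h⟩ := hu
    exact ⟨⟨s, (List.cons.inj h).1 ▸ hs, u ++ w, rfl⟩, append_mem_endsIn hw.2⟩

theorem exists_simulates_endsIn [Finite Y] {H : Set (Δ ⊕ Y)} {P : Y → FreeAlgebra K (Δ ⊕ Y)}
    (hP : ∀ y, P y ∈ wordSpan K (properWords Δ Y ∩ startsIn H)) :
    ∃ P' : Y ⊕ Y × Y → FreeAlgebra K (Δ ⊕ (Y ⊕ Y × Y)), Simulates P P' Sum.inl ∧
      ∀ z, P' z ∈ wordSpan K (startsIn (Sum.map id Sum.inl '' H) ∩ endsIn (letters Δ _)) := by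
  cases nonempty_fintype Y
  choose t ht r hr hP using fun y => exists_eq_add_sum_mul_ι (fun h => h.1.1 rfl) (hP y)
  have hr₀ x y : r x y ∈ wordSpan K (startsIn H) := by
    refine wordSpan_mono (fun u hu => ?_) (hr x y)
    obtain ⟨⟨-, hu⟩, s, hs, v, huv⟩ := hu
    cases u with
    | nil => exact absurd rfl (hu y)
    | cons s' u => exact ⟨s', (List.cons.inj huv).1 ▸ hs, u, rfl⟩
  have hr₁ x y : r x y ∈ wordSpan K {u | u ≠ []} :=
    wordSpan_mono (fun u hu => ne_of_mem_of_not_mem hu (nil_notMem_startsIn H)) (hr₀ x y)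
  have ht₀ x : t x ∈ wordSpan K (startsIn H ∩ endsIn (letters Δ Y)) :=
    wordSpan_mono (Set.inter_subset_inter_left _ Set.inter_subset_right) (ht x)
  choose t' ht' r' hr' hr'eq using fun x y =>
    exists_eq_add_sum_mul_ι (nil_notMem_startsIn H) (hr₀ x y)
  exact ⟨greibachSystem t r t' r', simulates_greibachSystem hP hr'eq hr₁,
    greibachSystem_mem_wordSpan ht₀ hr₀ ht' hr'⟩

theorem exists_simulates_doubleGreibach [Finite Y] {P : Y → FreeAlgebra K (Δ ⊕ Y)}
    (hP : ∀ y, P y ∈ wordSpan K (properWords Δ Y)) :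
    ∃ (Z : Type) (_ : Finite Z) (P' : Z → FreeAlgebra K (Δ ⊕ Z)) (e : Y → Z), Simulates P P' e ∧
      ∀ z, P' z ∈ wordSpan K (startsIn (letters Δ Z) ∩ endsIn (letters Δ Z)) := by
  have hP₀ y : P y ∈ wordSpan K (properWords Δ Y ∩ startsIn Set.univ) := by
    refine wordSpan_mono (fun u hu => ?_) (hP y)
    obtain ⟨s, v, rfl⟩ := List.exists_cons_of_ne_nil hu.1
    exact ⟨hu, s, trivial, v, rfl⟩
  obtain ⟨P₁, hsim₁, hP₁⟩ := exists_simulates_endsIn hP₀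
  have hP₁' z : star P₁ z ∈ wordSpan K (properWords Δ _ ∩ startsIn (letters Δ _)) := by
    refine star_mem_wordSpan (hP₁ z) fun u hu => ?_
    have hu' := reverse_mem_startsIn hu.2
    exact ⟨mem_properWords_of_mem_startsIn hu', hu'⟩
  obtain ⟨P₂, hsim₂, hP₂⟩ := exists_simulates_endsIn hP₁'
  have hletters : Sum.map id Sum.inl '' letters Δ (Y ⊕ Y × Y) =
      letters Δ ((Y ⊕ Y × Y) ⊕ (Y ⊕ Y × Y) × (Y ⊕ Y × Y)) := by
    rw [letters, ← Set.range_comp]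
    rfl
  rw [hletters] at hP₂
  exact ⟨_, inferInstance, star P₂, _, hsim₁.trans (star_star P₁ ▸ hsim₂.star), fun z =>
    star_mem_wordSpan (hP₂ z) fun u hu => ⟨reverse_mem_startsIn hu.2, reverse_mem_endsIn hu.1⟩⟩

end Greibach

section Padding

variable {K Δ Y Z : Type} [CommSemiring K]

/-- The substitution of the polynomials `Q y` for the variables `y`. -/
noncomputable def substVars (Q : Y → FreeAlgebra K (Δ ⊕ Z)) :
    FreeAlgebra K (Δ ⊕ Y) →ₐ[K] FreeAlgebra K (Δ ⊕ Z) :=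
  FreeAlgebra.lift K (Sum.elim (FreeAlgebra.ι K ∘ Sum.inl) Q)

theorem lift_substVars {R : Type} [Semiring R] [Algebra K R] (α : Δ → R) (V : Z → R)
    (Q : Y → FreeAlgebra K (Δ ⊕ Z)) (p : FreeAlgebra K (Δ ⊕ Y)) :
    FreeAlgebra.lift K (Sum.elim α V) (substVars Q p) =
      FreeAlgebra.lift K (Sum.elim α fun y => FreeAlgebra.lift K (Sum.elim α V) (Q y)) p := by
  rw [substVars, ← AlgHom.comp_apply]
  congr 1
  refine FreeAlgebra.hom_ext (funext ?_)
  rintro (a | y) <;> simp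

theorem substVars_wordMonomial_map_inl (Q : Y → FreeAlgebra K (Δ ⊕ Z)) (t : List Δ) :
    substVars Q (wordMonomial K (t.map Sum.inl)) = wordMonomial K (t.map Sum.inl) := by
  rw [substVars, lift_wordMonomial, wordMonomial, List.map_map, List.map_map]
  rfl

theorem substVars_ι_inr (Q : Y → FreeAlgebra K (Δ ⊕ Z)) (y : Y) :
    substVars Q (FreeAlgebra.ι K (Sum.inr y)) = Q y := by
  rw [substVars, FreeAlgebra.lift_ι_apply, Sum.elim_inr]

/-- The nonempty words without variables. -/
def letterWords (Δ Y : Type) : Set (List (Δ ⊕ Y)) := List.map Sum.inl '' {t | t ≠ []}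

/-- The words that start with `k` letters and end with a further letter. -/
def guardedWords (Δ Y : Type) (k : ℕ) : Set (List (Δ ⊕ Y)) :=
  {u | ∃ (t : List Δ) (v : List (Δ ⊕ Y)) (a : Δ),
    t.length = k ∧ u = t.map Sum.inl ++ (v ++ [Sum.inl a])}

theorem substVars_mem_guardedWords {k : ℕ} (Q : Y → FreeAlgebra K (Δ ⊕ Z))
    {p : FreeAlgebra K (Δ ⊕ Y)} (hp : p ∈ wordSpan K (guardedWords Δ Y k)) :
    substVars Q p ∈ wordSpan K (guardedWords Δ Z k) := by
  refine map_mem_of_mem_wordSpan (substVars Q).toLinearMap hp ?_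
  rintro _ ⟨t, v, a, rfl, rfl⟩
  have ha : substVars Q (wordMonomial K [Sum.inl a]) = wordMonomial K [Sum.inl a] :=
    substVars_wordMonomial_map_inl Q [a]
  rw [AlgHom.toLinearMap_apply, wordMonomial_append, map_mul, wordMonomial_append, map_mul, ha,
    substVars_wordMonomial_map_inl]
  have hvE : substVars Q (wordMonomial K v) * wordMonomial K [Sum.inl a] ∈
      wordSpan K (endsIn {Sum.inl a}) :=
    mul_mem_wordSpan_endsIn _ (wordMonomial_mem_wordSpan ⟨_, rfl, [], rfl⟩)
  refine mul_mem_wordSpan (wordMonomial_mem_wordSpan (Set.mem_singleton _)) hvE ?_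
  rintro _ rfl _ ⟨_, rfl, w, rfl⟩
  exact ⟨t, w, a, rfl, rfl⟩

theorem substVars_mem_padded_succ {k : ℕ} {Q : Y → FreeAlgebra K (Δ ⊕ Z)}
    (hQ : ∀ y, Q y ∈ wordSpan K (startsIn (letters Δ Z))) {p : FreeAlgebra K (Δ ⊕ Y)}
    (hp : p ∈ wordSpan K (letterWords Δ Y ∪ guardedWords Δ Y k)) :
    substVars Q p ∈ wordSpan K (letterWords Δ Z ∪ guardedWords Δ Z (k + 1)) := by
  refine map_mem_of_mem_wordSpan (substVars Q).toLinearMap hp ?_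
  rintro _ (⟨t, ht, rfl⟩ | ⟨t, v, a, rfl, rfl⟩) <;> rw [AlgHom.toLinearMap_apply]
  · rw [substVars_wordMonomial_map_inl]
    exact wordMonomial_mem_wordSpan (.inl ⟨t, ht, rfl⟩)
  rcases v with _ | ⟨b | y, v⟩
  · have hta : (t.map Sum.inl ++ ([] ++ [Sum.inl a]) : List (Δ ⊕ Y)) = (t ++ [a]).map Sum.inl := by
      simp
    rw [hta, substVars_wordMonomial_map_inl]
    exact wordMonomial_mem_wordSpan (.inl ⟨_, by simp, rfl⟩)
  · refine wordSpan_mono Set.subset_union_right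
      (substVars_mem_guardedWords Q (wordMonomial_mem_wordSpan ?_))
    exact ⟨t ++ [b], v, a, by simp, by simp⟩
  · have hva : substVars Q (wordMonomial K (v ++ [Sum.inl a])) ∈
        wordSpan K (guardedWords Δ Z 0) :=
      substVars_mem_guardedWords Q (wordMonomial_mem_wordSpan ⟨[], v, a, rfl, rfl⟩)
    rw [wordMonomial_append, map_mul, substVars_wordMonomial_map_inl, List.cons_append,
      ← List.singleton_append, wordMonomial_append, map_mul, wordMonomial_singleton,
      substVars_ι_inr]
    refine mul_mem_wordSpan (wordMonomial_mem_wordSpan (Set.mem_singleton _))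
      (mul_mem_wordSpan (E := {u | ∃ b w c, u = Sum.inl b :: (w ++ [Sum.inl c])}) (hQ y) hva ?_) ?_
    · rintro _ ⟨_, ⟨b, rfl⟩, w, rfl⟩ _ ⟨s, w', c, -, rfl⟩
      exact ⟨b, w ++ (s.map Sum.inl ++ w'), c, by simp⟩
    · rintro _ rfl _ ⟨b, w, c, rfl⟩
      exact .inr ⟨t ++ [b], w, c, by simp, by simp⟩

theorem exists_padded {P : Y → FreeAlgebra K (Δ ⊕ Y)}
    (hP : ∀ y, P y ∈ wordSpan K (startsIn (letters Δ Y) ∩ endsIn (letters Δ Y))) (k : ℕ) :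
    ∃ P' : Y → FreeAlgebra K (Δ ⊕ Y),
      (∀ y, P' y ∈ wordSpan K (letterWords Δ Y ∪ guardedWords Δ Y k)) ∧
      ∀ (R : Type) [Semiring R] [Algebra K R] (α : Δ → R) (V : Y → R),
        Solves P α V → Solves P' α V := by
  induction k with
  | zero =>
    refine ⟨P, fun y => wordSpan_mono ?_ (hP y), fun _ _ _ _ _ h => h⟩
    rintro u ⟨-, _, ⟨a, rfl⟩, v, rfl⟩
    exact .inr ⟨[], v, a, rfl, rfl⟩
  | succ k ih =>
    obtain ⟨P', hP', hsol⟩ := ih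
    refine ⟨fun y => substVars P (P' y), fun y => substVars_mem_padded_succ
      (fun z => wordSpan_mono Set.inter_subset_left (hP z)) (hP' y), ?_⟩
    intro R _ _ α V hV y
    rw [lift_substVars, ← show V = _ from funext hV]
    exact hsol R α V hV y

theorem exists_finsupp_of_mem_wordSpan {A ι : Type} {w : ι → List A} {C : Set ι}
    {p : FreeAlgebra K A} (hp : p ∈ wordSpan K (w '' C)) :
    ∃ T : ι →₀ K, (∀ i ∈ T.support, i ∈ C) ∧ p = ∑ i ∈ T.support, T i • wordMonomial K (w i) := by
  rw [wordSpan, Set.image_image, Finsupp.mem_span_image_iff_linearCombination] at hp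
  obtain ⟨T, hT, rfl⟩ := hp
  exact ⟨T, fun i hi => hT hi, rfl⟩

end Padding

section NormalForm

variable {K Δ Y : Type} [CommSemiring K] {N : ℕ}

/-- A right-hand side of a system in normal form, with variables numbered by `Fin N`: the word
`outerCall innerCall code innerRet body outerRet`. The number of the variable on the left-hand side
is encoded as the length of `code`. The names tell which positions of a nested word will carry the
arcs of the nesting that represents an application of the rule. -/
structure Rule (Δ : Type) (N : ℕ) : Type where
  outerCall : Δ
  innerCall : Δ
  code : List Δ
  innerRet : Δ
  body : List (Δ ⊕ Fin N)
  outerRet : Δ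

/-- The word on the right-hand side of a rule. -/
def Rule.word (r : Rule Δ N) : List (Δ ⊕ Fin N) :=
  Sum.inl r.outerCall :: Sum.inl r.innerCall ::
    (r.code.map Sum.inl ++ Sum.inl r.innerRet :: (r.body ++ [Sum.inl r.outerRet]))

/-- `V` solves the system in normal form whose rules have the weights `Q`. -/
def SolvesRules {R : Type} [Semiring R] [Algebra K R] (Q : Rule Δ N →₀ K) (α : Δ → R)
    (V : Fin N → R) : Prop :=
  ∀ X : Fin N, V X =
    ∑ r ∈ Q.support with r.code.length = (X : ℕ), Q r • (r.word.map (Sum.elim α V)).prod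

theorem guardedWords_subset_image_word {X : ℕ} (hX : X < N) :
    guardedWords Δ (Fin N) (N + 2) ⊆ Rule.word '' {r : Rule Δ N | r.code.length = X} := by
  rintro _ ⟨_ | ⟨a, _ | ⟨b, t⟩⟩, v, z, ht, rfl⟩
  · simp at ht
  · simp at ht
  have ht : t.length = N := by simpa using ht
  refine ⟨⟨a, b, t.take X, t[X], (t.drop (X + 1)).map Sum.inl ++ v, z⟩, by simp; omega, ?_⟩
  have hsplit : t.map Sum.inl = (t.take X).map Sum.inl ++
      Sum.inl t[X] :: (t.drop (X + 1)).map (Sum.inl (β := Fin N)) := by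
    rw [← List.map_cons, ← List.map_append, ← List.drop_eq_getElem_cons, List.take_append_drop]
  simp only [Rule.word, List.map_cons, hsplit, List.cons_append, List.append_assoc]

theorem exists_rules {W : Fin N → FreeAlgebra K (Δ ⊕ Fin N)}
    (hW : ∀ X, W X ∈ wordSpan K (guardedWords Δ (Fin N) (N + 2))) :
    ∃ Q : Rule Δ N →₀ K, ∀ X, W X =
      ∑ r ∈ Q.support with r.code.length = (X : ℕ), Q r • wordMonomial K r.word := by
  classical
  choose q hq hWq using fun X : Fin N => exists_finsupp_of_mem_wordSpan
    (wordSpan_mono (guardedWords_subset_image_word X.2) (hW X))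
  have hQ {X : Fin N} {r : Rule Δ N} (hr : r.code.length = X) : (∑ Z, q Z) r = q X r := by
    rw [Finsupp.finsetSum_apply]
    refine Finset.sum_eq_single X (fun Z _ hZ => ?_) (by simp)
    by_contra hne
    have hlen : r.code.length = Z := hq Z r (Finsupp.mem_support_iff.2 hne)
    exact hZ (Fin.ext (hlen.symm.trans hr))
  refine ⟨∑ X, q X, fun X => ?_⟩
  have hsupp : {r ∈ (∑ Z, q Z).support | r.code.length = (X : ℕ)} = (q X).support := by
    ext r
    rw [Finset.mem_filter]
    constructor
    · rintro ⟨hr, hlen⟩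
      rwa [Finsupp.mem_support_iff, hQ hlen, ← Finsupp.mem_support_iff] at hr
    · intro hr
      have hlen : r.code.length = X := hq X r hr
      rw [Finsupp.mem_support_iff, hQ hlen, ← Finsupp.mem_support_iff]
      exact ⟨hr, hlen⟩
  rw [hsupp, hWq]
  exact Finset.sum_congr rfl fun r hr => by rw [hQ (hq X r hr)]

theorem exists_normalForm [Finite Y] {P : Y → FreeAlgebra K (Δ ⊕ Y)}
    (hP : ∀ y, P y ∈ wordSpan K (properWords Δ Y)) (x₀ : Y) :
    ∃ (N : ℕ) (Q : Rule Δ N →₀ K) (T : List Δ →₀ K) (X₀ : Fin N), [] ∉ T.support ∧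
      ∀ (R : Type) [Semiring R] [Algebra K R] (I : Submodule K R), IsNilpotentIdeal I →
      ∀ (α : Δ → R) (V : Y → R), (∀ a, α a ∈ I) → (∀ y, V y ∈ I) → Solves P α V →
      ∃ V' : Fin N → R, (∀ X, V' X ∈ I) ∧ SolvesRules Q α V' ∧
        V x₀ = ∑ t ∈ T.support, T t • (t.map α).prod + V' X₀ := by
  obtain ⟨Z, _, P₁, ι, hsim, hP₁⟩ := exists_simulates_doubleGreibach hP
  obtain ⟨N, ⟨e⟩⟩ := Finite.exists_equiv_fin Z
  obtain ⟨P₂, hP₂, hsol₂⟩ := exists_padded hP₁ (N + 2)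
  simp only [wordSpan_union, Submodule.mem_sup] at hP₂
  choose T hT W hW hTW using hP₂
  choose τ hτ hTτ using fun z => exists_finsupp_of_mem_wordSpan (hT z)
  let σ : Z → FreeAlgebra K (Δ ⊕ Fin N) := fun z =>
    ∑ t ∈ (τ z).support, τ z t • wordMonomial K (t.map Sum.inl) + FreeAlgebra.ι K (Sum.inr (e z))
  obtain ⟨Q, hQ⟩ := exists_rules fun X => substVars_mem_guardedWords σ (hW (e.symm X))
  refine ⟨N, Q, τ (ι x₀), e (ι x₀), fun h => hτ _ _ h rfl, ?_⟩
  intro R _ _ I hI α V hα hV hsol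
  obtain ⟨V₁, hV₁, hsol₁, rfl⟩ := hsim R I hI α V hα hV hsol
  have hV₁eq := hsol₂ R α V₁ hsol₁
  set V' : Fin N → R := fun X => FreeAlgebra.lift K (Sum.elim α V₁) (W (e.symm X)) with hV'
  have hdecomp z : V₁ z = ∑ t ∈ (τ z).support, τ z t • (t.map α).prod + V' (e z) := by
    rw [hV₁eq z, ← hTW z, map_add, hTτ, map_sum]
    simp [hV', lift_wordMonomial, Function.comp_def]
  have hσ z : FreeAlgebra.lift K (Sum.elim α V') (σ z) = V₁ z := by
    rw [hdecomp, map_add, map_sum]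
    simp [lift_wordMonomial, Function.comp_def]
  refine ⟨V', fun X => ?_, fun X => ?_, hdecomp _⟩
  · exact hI.lift_mem (fun s => Sum.rec hα hV₁ s) (by simp [guardedWords]) (hW _)
  · have h := congrArg (FreeAlgebra.lift K (Sum.elim α V')) (hQ X)
    rw [lift_substVars, funext hσ] at h
    refine h.trans ((map_sum _ _ _).trans ?_)
    simp only [map_smul, lift_wordMonomial]

end NormalForm

/-! ### Words as incidence algebras -/

section IntervalElements

variable {K : Type} [CommSemiring K] {n : ℕ}

/-- The element of the incidence algebra of `{0, …, n}` given by a function on pairs of numbers. -/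
def ofIntervals (n : ℕ) (F : ℕ → ℕ → K) : IncidenceAlgebra K (Fin (n + 1)) where
  toFun i j := if i ≤ j then F i j else 0
  eq_zero_of_not_le' _ _ h := if_neg h

theorem ofIntervals_apply (F : ℕ → ℕ → K) {i j : Fin (n + 1)} (hij : i ≤ j) :
    ofIntervals n F i j = F i j := if_pos hij

theorem ofIntervals_mul (F G : ℕ → ℕ → K) :
    ofIntervals n F * ofIntervals n G =
      ofIntervals n fun x y => ∑ z ∈ Finset.Icc x y, F x z * G z y := by
  ext i j hij
  rw [IncidenceAlgebra.mul_apply, ofIntervals_apply _ hij, ← Fin.map_valEmbedding_Icc,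
    Finset.sum_map]
  refine Finset.sum_congr rfl fun z hz => ?_
  rw [Finset.mem_Icc] at hz
  rw [ofIntervals_apply F hz.1, ofIntervals_apply G hz.2]
  rfl

theorem ofIntervals_eq_one : ofIntervals n (fun x y => if x = y then (1 : K) else 0) = 1 := by
  ext i j hij
  rw [ofIntervals_apply _ hij, IncidenceAlgebra.one_apply]
  simp only [Fin.ext_iff]

/-- The elements supported on the pairs `(i, j)` with `i + d ≤ j`. -/
def diagonalsFrom (K : Type) [CommSemiring K] (n d : ℕ) :
    Submodule K (IncidenceAlgebra K (Fin (n + 1))) where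
  carrier := {f | ∀ i j : Fin (n + 1), (j : ℕ) < i + d → f i j = 0}
  add_mem' hf hg i j h := by rw [IncidenceAlgebra.add_apply, hf i j h, hg i j h, add_zero]
  zero_mem' _ _ _ := rfl
  smul_mem' c f hf i j h := by rw [IncidenceAlgebra.constSMul_apply, hf i j h, smul_zero]

theorem mem_diagonalsFrom_zero (f : IncidenceAlgebra K (Fin (n + 1))) :
    f ∈ diagonalsFrom K n 0 := fun _ _ h =>
  IncidenceAlgebra.apply_eq_zero_of_not_le (Fin.not_le.2 h) f

theorem ofIntervals_mem_diagonalsFrom_one {F : ℕ → ℕ → K} (hF : ∀ x, F x x = 0) :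
    ofIntervals n F ∈ diagonalsFrom K n 1 := by
  intro i j h
  rcases Nat.lt_succ_iff_lt_or_eq.1 h with hlt | heq
  · exact IncidenceAlgebra.apply_eq_zero_of_not_le (Fin.not_le.2 hlt) (ofIntervals n F)
  · obtain rfl : j = i := Fin.ext heq
    rw [ofIntervals_apply _ le_rfl, hF]

theorem mul_mem_diagonalsFrom {c d : ℕ} {f g : IncidenceAlgebra K (Fin (n + 1))}
    (hf : f ∈ diagonalsFrom K n c) (hg : g ∈ diagonalsFrom K n d) :
    f * g ∈ diagonalsFrom K n (c + d) := by
  intro i j h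
  rw [IncidenceAlgebra.mul_apply]
  refine Finset.sum_eq_zero fun z _ => ?_
  rcases lt_or_ge (z : ℕ) (i + c) with hz | hz
  · rw [hf i z hz, zero_mul]
  · rw [hg z j (by omega), mul_zero]

theorem isNilpotentIdeal_diagonalsFrom_one : IsNilpotentIdeal (diagonalsFrom K n 1) where
  mul_mem_left f _ hg := by
    simpa using mul_mem_diagonalsFrom (mem_diagonalsFrom_zero f) hg
  mul_mem_right g hf := by
    simpa using mul_mem_diagonalsFrom hf (mem_diagonalsFrom_zero g)
  isNilpotent := by
    have hpow k : diagonalsFrom K n 1 ^ k ≤ diagonalsFrom K n k := by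
      induction k with
      | zero => exact fun f _ => mem_diagonalsFrom_zero f
      | succ k ih =>
        have : IsScalarTower K (IncidenceAlgebra K (Fin (n + 1)))
          (IncidenceAlgebra K (Fin (n + 1))) := inferInstance
        rw [pow_succ, Submodule.mul_le]
        exact fun f hf g hg => mul_mem_diagonalsFrom (ih hf) hg
    refine ⟨n + 1, eq_bot_iff.2 fun f hf => (Submodule.mem_bot K).2 ?_⟩
    ext i j _
    exact hpow _ hf i j (by omega)

/-- The elements `f` and `g` agree on the pairs `(i, j)` with `j < i + d`. -/
def EqBelow (d : ℕ) (f g : IncidenceAlgebra K (Fin (n + 1))) : Prop :=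
  ∀ i j : Fin (n + 1), (j : ℕ) < i + d → f i j = g i j

theorem EqBelow.mul {d : ℕ} {f f' g g' : IncidenceAlgebra K (Fin (n + 1))}
    (hf : EqBelow d f f') (hg : EqBelow d g g') : EqBelow d (f * g) (f' * g') := by
  intro i j h
  rw [IncidenceAlgebra.mul_apply, IncidenceAlgebra.mul_apply]
  refine Finset.sum_congr rfl fun z hz => ?_
  rw [Finset.mem_Icc, Fin.le_def, Fin.le_def] at hz
  rw [hf i z (by omega), hg z j (by omega)]

theorem EqBelow.mul_left_of_mem {d : ℕ} {f g g' : IncidenceAlgebra K (Fin (n + 1))}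
    (hf : f ∈ diagonalsFrom K n 1) (hg : EqBelow d g g') : EqBelow (d + 1) (f * g) (f * g') := by
  intro i j h
  rw [IncidenceAlgebra.mul_apply, IncidenceAlgebra.mul_apply]
  refine Finset.sum_congr rfl fun z _ => ?_
  rcases lt_or_ge (z : ℕ) (i + 1) with hz | hz
  · rw [hf i z hz, zero_mul, zero_mul]
  · rw [hg z j (by omega)]

theorem EqBelow.prod_map {A : Type} {d : ℕ} {f g : A → IncidenceAlgebra K (Fin (n + 1))}
    (h : ∀ a, EqBelow d (f a) (g a)) (u : List A) :
    EqBelow d (u.map f).prod (u.map g).prod := by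
  induction u with
  | nil => exact fun _ _ _ => rfl
  | cons a u ih =>
    rw [List.map_cons, List.map_cons, List.prod_cons, List.prod_cons]
    exact (h a).mul ih

theorem sum_smul_apply {ι : Type} (s : Finset ι) (c : ι → K)
    (f : ι → IncidenceAlgebra K (Fin (n + 1))) (i j : Fin (n + 1)) :
    (∑ r ∈ s, c r • f r) i j = ∑ r ∈ s, c r * f r i j := by
  classical
  induction s using Finset.induction_on with
  | empty => rfl
  | insert r s hr ih =>
    rw [Finset.sum_insert hr, Finset.sum_insert hr, IncidenceAlgebra.add_apply, ih]
    rfl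

theorem SolvesRules.unique {Δ : Type} {N : ℕ} {Q : Rule Δ N →₀ K}
    {α : Δ → IncidenceAlgebra K (Fin (n + 1))} {V V' : Fin N → IncidenceAlgebra K (Fin (n + 1))}
    (hα : ∀ a, α a ∈ diagonalsFrom K n 1) (hV : SolvesRules Q α V) (hV' : SolvesRules Q α V') :
    V = V' := by
  have key d X : EqBelow d (V X) (V' X) := by
    induction d generalizing X with
    | zero =>
      intro i j h
      rw [mem_diagonalsFrom_zero (V X) i j h, mem_diagonalsFrom_zero (V' X) i j h]
    | succ d ih =>
      intro i j h
      rw [hV X, hV' X, sum_smul_apply, sum_smul_apply]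
      refine Finset.sum_congr rfl fun r _ => ?_
      have htail := EqBelow.prod_map (f := Sum.elim α V) (g := Sum.elim α V')
        (Sum.rec (fun _ _ _ _ => rfl) ih) r.word.tail
      exact congrArg (Q r * ·) (htail.mul_left_of_mem (hα r.outerCall) i j h)
  funext X
  ext i j _
  exact key (n + 1) X i j (by omega)

end IntervalElements

section Windows

variable {K Δ Y : Type} [CommSemiring K]

/-- The values of the series `F` on the factors of the word `w`, as an element of an incidence
algebra. -/
def window (w : List Δ) (F : List Δ → K) : IncidenceAlgebra K (Fin (w.length + 1)) :=
  ofIntervals w.length fun x y => F ((w.drop x).take (y - x))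

theorem window_mem_diagonalsFrom_one (w : List Δ) {F : List Δ → K} (hF : F [] = 0) :
    window w F ∈ diagonalsFrom K w.length 1 :=
  ofIntervals_mem_diagonalsFrom_one fun x => by rw [Nat.sub_self, List.take_zero, hF]

theorem window_mul (w : List Δ) (F G : List Δ → K) :
    window w F * window w G = window w fun v =>
      ∑ k ∈ Finset.range (v.length + 1), F (v.take k) * G (v.drop k) := by
  rw [window, window, ofIntervals_mul]
  ext i j hij
  have hj := j.is_le
  rw [window, ofIntervals_apply _ hij, ofIntervals_apply _ hij, ← Finset.Ico_succ_right_eq_Icc,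
    Order.succ_eq_add_one, Finset.sum_Ico_eq_sum_range]
  rw [Fin.le_def] at hij
  have hlen : ((w.drop i).take (j - i)).length + 1 = j + 1 - i := by
    rw [List.length_take, List.length_drop]
    omega
  rw [hlen]
  refine Finset.sum_congr rfl fun k hk => ?_
  rw [Finset.mem_range] at hk
  rw [Nat.add_sub_cancel_left, List.take_take, List.drop_take, List.drop_drop,
    min_eq_left (by omega), Nat.sub_sub]

theorem wordSeries_cons_inl [DecidableEq Δ] (S : Y → List Δ → K) (a : Δ) (u : List (Δ ⊕ Y))
    (w : List Δ) : wordSeries S (Sum.inl a :: u) w =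
      ∑ k ∈ Finset.range (w.length + 1),
        (if w.take k = [a] then 1 else 0) * wordSeries S u (w.drop k) := by
  cases w with
  | nil => simp [wordSeries]
  | cons b w =>
    rw [Finset.sum_eq_single 1]
    · simp [wordSeries]
    · rintro (_ | _ | k) hk hne
      · simp
      · exact absurd rfl hne
      · have : w ≠ [] := by
          rintro rfl
          simp at hk
        simp [this]
    · simp

theorem window_wordSeries [DecidableEq Δ] (S : Y → List Δ → K) (w : List Δ)
    (u : List (Δ ⊕ Y)) : window w (wordSeries S u) = (u.map (Sum.elim
      (fun a => window w fun v => if v = [a] then 1 else 0) fun y => window w (S y))).prod := by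
  induction u with
  | nil =>
    rw [List.map_nil, List.prod_nil, ← ofIntervals_eq_one]
    ext i j hij
    have hj := j.is_le
    rw [window, ofIntervals_apply _ hij, ofIntervals_apply _ hij, wordSeries]
    rw [Fin.le_def] at hij
    refine if_congr ?_ rfl rfl
    rw [← List.length_eq_zero_iff, List.length_take, List.length_drop]
    omega
  | cons σ u ih =>
    rw [List.map_cons, List.prod_cons, ← ih]
    rcases σ with a | y
    · rw [Sum.elim_inl, window_mul, funext (wordSeries_cons_inl S a u)]
    · rw [Sum.elim_inr, window_mul]
      rfl

theorem solves_window [DecidableEq Δ] {P : Y → List (Δ ⊕ Y) → K} {S : Y → List Δ → K}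
    (hP : ∀ y, (Function.support (P y)).Finite) (hS : IsSolution P S) (w : List Δ) :
    Solves (fun y => ∑ u ∈ (hP y).toFinset, P y u • wordMonomial K u)
      (fun a => window w fun v => if v = [a] then 1 else 0) fun y => window w (S y) := by
  intro y
  simp only [map_sum, map_smul, lift_wordMonomial, ← window_wordSeries]
  ext i j hij
  simp only [sum_smul_apply, window, ofIntervals_apply _ hij]
  rw [hS, finsum_eq_sum_of_support_subset]
  intro u hu
  rw [Set.Finite.coe_toFinset]
  exact left_ne_zero_of_mul hu

end Windows

/-! ### Nestings and their local weights -/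

/-- A nesting relation, given as the finite set of its arcs. -/
structure IsNesting (s : Finset (ℕ × ℕ)) : Prop where
  lt : ∀ p q, (p, q) ∈ s → p < q
  right_unique : ∀ p q q', (p, q) ∈ s → (p, q') ∈ s → q = q'
  left_unique : ∀ p p' q, (p, q) ∈ s → (p', q) ∈ s → p = p'
  noncrossing : ∀ p q p' q', (p, q) ∈ s → (p', q') ∈ s → p < p' → q < p' ∨ q' < q

theorem IsNesting.mono {s t : Finset (ℕ × ℕ)} (hs : IsNesting s) (hts : t ⊆ s) : IsNesting t where
  lt p q h := hs.lt p q (hts h)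
  right_unique p q q' h h' := hs.right_unique p q q' (hts h) (hts h')
  left_unique p p' q h h' := hs.left_unique p p' q (hts h) (hts h')
  noncrossing p q p' q' h h' := hs.noncrossing p q p' q' (hts h) (hts h')

open Classical in
/-- The nestings all of whose arcs have both ends in `(x, y]`. -/
noncomputable def nestings (x y : ℕ) : Finset (Finset (ℕ × ℕ)) :=
  {s ∈ (Finset.Ioc x y ×ˢ Finset.Ioc x y).powerset | IsNesting s}

theorem mem_nestings {x y : ℕ} {s : Finset (ℕ × ℕ)} :
    s ∈ nestings x y ↔ IsNesting s ∧ ∀ p q, (p, q) ∈ s → x < p ∧ q ≤ y := by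
  classical
  rw [nestings, Finset.mem_filter, Finset.mem_powerset, and_comm]
  refine and_congr_right fun hs => ⟨fun h p q hpq => ?_, fun h pq hpq => ?_⟩
  · have := h hpq
    rw [Finset.mem_product, Finset.mem_Ioc, Finset.mem_Ioc] at this
    exact ⟨this.1.1, this.2.2⟩
  · have hlt := hs.lt _ _ hpq
    have hb := h _ _ hpq
    rw [Finset.mem_product, Finset.mem_Ioc, Finset.mem_Ioc]
    omega

theorem nestings_eq_singleton_empty {x y : ℕ} (h : y ≤ x + 1) : nestings x y = {∅} := by
  ext s
  rw [mem_nestings, Finset.mem_singleton]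
  refine ⟨fun ⟨hs, hb⟩ => Finset.eq_empty_of_forall_notMem fun pq hpq => ?_, ?_⟩
  · have hlt := hs.lt _ _ hpq
    have := hb _ _ hpq
    omega
  · rintro rfl
    exact ⟨⟨by simp, by simp, by simp, by simp⟩, by simp⟩

/-- The position `k` is not an end of an arc of `s`. -/
def IsInternal (s : Finset (ℕ × ℕ)) (k : ℕ) : Prop := ∀ p q, (p, q) ∈ s → p ≠ k ∧ q ≠ k

/-- The position `k` is the left end of an arc of `s`. -/
def IsCall (s : Finset (ℕ × ℕ)) (k : ℕ) : Prop := ∃ j, (k, j) ∈ s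

/-- The arc sets `s` and `t` have the same arcs with an end in `(x, y]`. -/
def AgreeOn (s t : Finset (ℕ × ℕ)) (x y : ℕ) : Prop :=
  ∀ p q, ((x < p ∧ p ≤ y) ∨ (x < q ∧ q ≤ y)) → ((p, q) ∈ s ↔ (p, q) ∈ t)

/-- No arc of `s` leaves `(x, y]` to the right. -/
def IsClosedOn (s : Finset (ℕ × ℕ)) (x y : ℕ) : Prop :=
  ∀ p q, (p, q) ∈ s → x < p → p ≤ y → q ≤ y

section Agreement

variable {s t : Finset (ℕ × ℕ)} {x y : ℕ}

theorem AgreeOn.symm (h : AgreeOn s t x y) : AgreeOn t s x y := fun p q hpq => (h p q hpq).symm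

theorem AgreeOn.mono {x' y' : ℕ} (h : AgreeOn s t x y) (hx : x ≤ x') (hy : y' ≤ y) :
    AgreeOn s t x' y' := fun p q hpq => h p q (by omega)

theorem AgreeOn.isInternal {k : ℕ} (h : AgreeOn s t x y) (hx : x < k) (hy : k ≤ y)
    (hs : IsInternal s k) : IsInternal t k := by
  intro p q hpq
  have hst := h p q
  have := hs p q
  grind

theorem AgreeOn.isClosedOn (h : AgreeOn s t x y) (hs : IsClosedOn s x y) : IsClosedOn t x y :=
  fun p q hpq hx hy => hs p q ((h p q (Or.inl ⟨hx, hy⟩)).2 hpq) hx hy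

end Agreement

section Spelling

variable {Δ : Type} {N : ℕ} (ℓ : ℕ → Δ) (s : Finset (ℕ × ℕ))

/-- The interval `(x, z]` spells the symbol `σ` in the nesting `s` labelled by `ℓ`: a letter is
spelled by an internal position carrying it, and the nonterminal `X` by an arc over `(x, z]` whose
successor position is joined to the position `X + 1` places further right. -/
def SpellsSymbol : Δ ⊕ Fin N → ℕ → ℕ → Prop
  | Sum.inl a, x, z => z = x + 1 ∧ IsInternal s z ∧ ℓ z = a
  | Sum.inr X, x, z => (x + 1, z) ∈ s ∧ (x + 2, x + 3 + X) ∈ s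

/-- The interval `(x, y]` is a concatenation of intervals spelling the symbols of a word. -/
def Spells : List (Δ ⊕ Fin N) → ℕ → ℕ → Prop
  | [], x, y => x = y
  | σ :: u, x, y => ∃ z, SpellsSymbol ℓ s σ x z ∧ Spells u z y

/-- The nesting `s` shows the rule `r` at the arc with left end `k`. -/
def HasRuleAt (r : Rule Δ N) (k : ℕ) : Prop :=
  ∃ z, (k, z + 1) ∈ s ∧ (k + 1, k + 2 + r.code.length) ∈ s ∧
    ℓ k = r.outerCall ∧ ℓ (k + 1) = r.innerCall ∧
    Spells ℓ s (r.code.map Sum.inl : List (Δ ⊕ Fin N)) (k + 1) (k + 1 + r.code.length) ∧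
    ℓ (k + 2 + r.code.length) = r.innerRet ∧
    Spells ℓ s r.body (k + 2 + r.code.length) z ∧ ℓ (z + 1) = r.outerRet

variable {ℓ s} {t : Finset (ℕ × ℕ)} {x y z : ℕ} {σ : Δ ⊕ Fin N}

theorem SpellsSymbol.lt (hs : IsNesting s) (h : SpellsSymbol ℓ s σ x z) : x < z := by
  cases σ with
  | inl a => exact h.1 ▸ Nat.lt_succ_self x
  | inr X => exact lt_trans (Nat.lt_succ_self x) (hs.lt _ _ h.1)

theorem Spells.le (hs : IsNesting s) {u : List (Δ ⊕ Fin N)} (h : Spells ℓ s u x y) :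
    x ≤ y := by
  induction u generalizing x with
  | nil => exact h.le
  | cons σ u ih =>
    obtain ⟨z, hσ, hu⟩ := h
    exact (hσ.lt hs).le.trans (ih hu)

theorem spells_append (u v : List (Δ ⊕ Fin N)) :
    Spells ℓ s (u ++ v) x y ↔ ∃ z, Spells ℓ s u x z ∧ Spells ℓ s v z y := by
  induction u generalizing x with
  | nil => exact ⟨fun h => ⟨x, rfl, h⟩, fun ⟨_, hxz, h⟩ => hxz ▸ h⟩
  | cons σ u ih =>
    simp only [List.cons_append, Spells, ih]
    grind

theorem Spells.of_map_inl {p : List Δ}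
    (h : Spells ℓ s (p.map Sum.inl : List (Δ ⊕ Fin N)) x y) :
    y = x + p.length ∧ ∀ k, x < k → k ≤ y → IsInternal s k := by
  induction p generalizing x with
  | nil =>
    obtain rfl : x = y := h
    exact ⟨rfl, fun k hx hy => absurd hx hy.not_gt⟩
  | cons a p ih =>
    obtain ⟨z, ⟨rfl, hz, -⟩, hp⟩ := h
    obtain ⟨hlen, hint⟩ := ih hp
    refine ⟨by rw [hlen, List.length_cons]; omega, fun k hx hy => ?_⟩
    rcases Nat.eq_or_lt_of_le hx with rfl | hk
    · exact hz
    · exact hint k hk hy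

theorem SpellsSymbol.of_agreeOn (hs : IsNesting s) (hst : AgreeOn s t x z)
    (h : SpellsSymbol ℓ s σ x z) : SpellsSymbol ℓ t σ x z := by
  have hlt := h.lt hs
  cases σ with
  | inl a => exact ⟨h.1, hst.isInternal hlt le_rfl h.2.1, h.2.2⟩
  | inr X =>
    have hxz := hs.lt _ _ h.1
    exact ⟨(hst _ _ (by omega)).1 h.1, (hst _ _ (by omega)).1 h.2⟩

theorem Spells.of_agreeOn (hs : IsNesting s) {u : List (Δ ⊕ Fin N)} (hst : AgreeOn s t x y)
    (h : Spells ℓ s u x y) : Spells ℓ t u x y := by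
  induction u generalizing x with
  | nil => exact h
  | cons σ u ih =>
    obtain ⟨z, hσ, hu⟩ := h
    exact ⟨z, hσ.of_agreeOn hs (hst.mono le_rfl (hu.le hs)),
      ih (hst.mono (hσ.lt hs).le le_rfl) hu⟩

theorem HasRuleAt.of_agreeOn (hs : IsNesting s) {r : Rule Δ N} {k : ℕ} (hst : AgreeOn s t x y)
    (hcl : IsClosedOn s x y) (hx : x < k) (hy : k ≤ y) (h : HasRuleAt ℓ s r k) :
    HasRuleAt ℓ t r k := by
  obtain ⟨z, hout, hin, ha, hb, hcode, hc, hbody, hd⟩ := h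
  have hkz := hs.lt _ _ hout
  have hzy := hcl _ _ hout hx hy
  have hinlt := hs.lt _ _ hin
  have hiny := hcl _ _ hin (by omega) (by omega)
  exact ⟨z, (hst _ _ (by omega)).1 hout, (hst _ _ (by omega)).1 hin, ha, hb,
    hcode.of_agreeOn hs (hst.mono (by omega) (by omega)), hc,
    hbody.of_agreeOn hs (hst.mono (by omega) (by omega)), hd⟩

theorem SpellsSymbol.unique (hs : IsNesting s) {z' : ℕ} (h : SpellsSymbol ℓ s σ x z)
    (h' : SpellsSymbol ℓ s σ x z') : z = z' := by
  cases σ with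
  | inl a => exact h.1.trans h'.1.symm
  | inr X => exact hs.right_unique _ _ _ h.1 h'.1

/-- No arc of `s` passes from `(-∞, z]` to `(z, ∞)`. -/
def IsCut (s : Finset (ℕ × ℕ)) (z : ℕ) : Prop := ∀ p q, (p, q) ∈ s → q ≤ z ∨ z < p

theorem SpellsSymbol.isCut (hs : s ∈ nestings x y) (h : SpellsSymbol ℓ s σ x z) : IsCut s z := by
  obtain ⟨hn, hb⟩ := mem_nestings.1 hs
  intro p q hpq
  have hxp := (hb p q hpq).1
  cases σ with
  | inl a =>
    have hz := h.1
    have := h.2.1 p q hpq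
    omega
  | inr X =>
    rcases Nat.eq_or_lt_of_le hxp with rfl | hp
    · exact Or.inl (hn.right_unique _ _ _ hpq h.1).le
    · exact (hn.noncrossing _ _ _ _ h.1 hpq hp).symm.imp_left le_of_lt

end Spelling

section Splitting

variable {x y z : ℕ}

theorem union_mem_nestings {s t : Finset (ℕ × ℕ)} (hs : s ∈ nestings x z) (ht : t ∈ nestings z y)
    (hxz : x ≤ z) (hzy : z ≤ y) : s ∪ t ∈ nestings x y := by
  rw [mem_nestings] at *
  obtain ⟨⟨slt, sr, sl, sn⟩, sb⟩ := hs
  obtain ⟨⟨tlt, tr, tl, tn⟩, tb⟩ := ht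
  refine ⟨⟨by grind, fun p q q' h h' => ?_, fun p p' q h h' => ?_, fun p q p' q' h h' _ => ?_⟩,
    by grind⟩
  · grind [sr p q q', tr p q q']
  · grind [sl p p' q, tl p p' q]
  · grind [sn p q p' q', tn p q p' q']

theorem agreeOn_union_left {s t : Finset (ℕ × ℕ)} (ht : t ∈ nestings z y) :
    AgreeOn s (s ∪ t) x z := by
  intro p q hpq
  have hlt := (mem_nestings.1 ht).1.lt p q
  have hb := (mem_nestings.1 ht).2 p q
  grind

theorem agreeOn_union_right {s t : Finset (ℕ × ℕ)} (hs : s ∈ nestings x z) :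
    AgreeOn t (s ∪ t) z y := by
  intro p q hpq
  have hlt := (mem_nestings.1 hs).1.lt p q
  have hb := (mem_nestings.1 hs).2 p q
  grind

theorem isClosedOn_of_mem_nestings {s : Finset (ℕ × ℕ)} (hs : s ∈ nestings x y) :
    IsClosedOn s x y := fun p q hpq _ _ => ((mem_nestings.1 hs).2 p q hpq).2

open Classical in
theorem sum_nestings_isCut {K : Type} [AddCommMonoid K] (hxz : x ≤ z) (hzy : z ≤ y)
    (F : Finset (ℕ × ℕ) → K) :
    ∑ s ∈ nestings x y with IsCut s z, F s =
      ∑ s ∈ nestings x z, ∑ t ∈ nestings z y, F (s ∪ t) := by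
  rw [← Finset.sum_product']
  symm
  refine Finset.sum_bij' (fun q _ => q.1 ∪ q.2)
    (fun s _ => (s.filter fun pq => pq.2 ≤ z, s.filter fun pq => z < pq.1)) ?_ ?_ ?_ ?_
    fun _ _ => rfl
  · rintro ⟨s, t⟩ h
    rw [Finset.mem_product] at h
    refine Finset.mem_filter.2 ⟨union_mem_nestings h.1 h.2 hxz hzy, fun p q hpq => ?_⟩
    have hs := (mem_nestings.1 h.1).2 p q
    have ht := (mem_nestings.1 h.2).2 p q
    grind
  · intro s h
    obtain ⟨hn, hb⟩ := mem_nestings.1 (Finset.mem_filter.1 h).1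
    exact Finset.mem_product.2
      ⟨mem_nestings.2 ⟨hn.mono (Finset.filter_subset _ _), by grind⟩,
        mem_nestings.2 ⟨hn.mono (Finset.filter_subset _ _), by grind⟩⟩
  · rintro ⟨s, t⟩ h
    rw [Finset.mem_product, mem_nestings, mem_nestings] at h
    obtain ⟨⟨hs, hsb⟩, ht, htb⟩ := h
    have hslt := hs.lt
    have htlt := ht.lt
    refine Prod.ext ?_ ?_
    · ext ⟨p, q⟩
      grind
    · ext ⟨p, q⟩
      grind
  · intro s h
    have hcut := (Finset.mem_filter.1 h).2
    ext ⟨p, q⟩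
    have := hcut p q
    grind

end Splitting

section Weights

variable {K Δ : Type} [CommSemiring K] {N : ℕ} (ℓ : ℕ → Δ) (Q : Rule Δ N →₀ K)

open Classical in
/-- The weight of position `k` in the nesting `s`: if two successive calls start at `k`, the
coefficient of the rule shown there, and otherwise `1`. -/
noncomputable def localWeight (s : Finset (ℕ × ℕ)) (k : ℕ) : K :=
  if IsCall s k ∧ IsCall s (k + 1) then
    ∑ r ∈ Q.support, if HasRuleAt ℓ s r k then Q r else 0
  else 1

open Classical in
/-- The total weight of the nestings on `(x, y]` in which `(x, y]` spells the symbol `σ`. -/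
noncomputable def symbolWeight (σ : Δ ⊕ Fin N) (x y : ℕ) : K :=
  ∑ s ∈ nestings x y with SpellsSymbol ℓ s σ x y, ∏ k ∈ Finset.Ioc x y, localWeight ℓ Q s k

open Classical in
/-- The total weight of the nestings on `(x, y]` in which `(x, y]` spells the word `u`. -/
noncomputable def wordWeight (u : List (Δ ⊕ Fin N)) (x y : ℕ) : K :=
  ∑ s ∈ nestings x y with Spells ℓ s u x y, ∏ k ∈ Finset.Ioc x y, localWeight ℓ Q s k

variable {ℓ Q} {s t : Finset (ℕ × ℕ)} {x y z : ℕ} {σ : Δ ⊕ Fin N} {u : List (Δ ⊕ Fin N)}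

theorem localWeight_congr (hs : IsNesting s) (ht : IsNesting t) {k : ℕ} (hst : AgreeOn s t x y)
    (hcl : IsClosedOn s x y) (hx : x < k) (hy : k ≤ y) :
    localWeight ℓ Q s k = localWeight ℓ Q t k := by
  have hrule (r : Rule Δ N) : HasRuleAt ℓ s r k ↔ HasRuleAt ℓ t r k :=
    ⟨fun h => h.of_agreeOn hs hst hcl hx hy,
      fun h => h.of_agreeOn ht hst.symm (hst.isClosedOn hcl) hx hy⟩
  have hcall {s t : Finset (ℕ × ℕ)} (hs : IsNesting s) (hst : AgreeOn s t x y)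
      (hcl : IsClosedOn s x y) : IsCall s k ∧ IsCall s (k + 1) → IsCall t k ∧ IsCall t (k + 1) := by
    rintro ⟨⟨j, hj⟩, ⟨j', hj'⟩⟩
    have hjy := hcl _ _ hj hx hy
    have hkj := hs.lt _ _ hj
    exact ⟨⟨j, (hst _ _ (by omega)).1 hj⟩, ⟨j', (hst _ _ (by omega)).1 hj'⟩⟩
  have hcalls : IsCall s k ∧ IsCall s (k + 1) ↔ IsCall t k ∧ IsCall t (k + 1) :=
    ⟨hcall hs hst hcl, hcall ht hst.symm (hst.isClosedOn hcl)⟩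
  classical
  simp only [localWeight, hrule, hcalls]

theorem prod_localWeight_congr (hs : IsNesting s) (ht : IsNesting t) (hst : AgreeOn s t x y)
    (hcl : IsClosedOn s x y) :
    ∏ k ∈ Finset.Ioc x y, localWeight ℓ Q s k = ∏ k ∈ Finset.Ioc x y, localWeight ℓ Q t k :=
  Finset.prod_congr rfl fun _ hk =>
    localWeight_congr hs ht hst hcl (Finset.mem_Ioc.1 hk).1 (Finset.mem_Ioc.1 hk).2

theorem symbolWeight_mul_wordWeight (hxz : x ≤ z) (hzy : z ≤ y) :
    symbolWeight ℓ Q σ x z * wordWeight ℓ Q u z y =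
      open Classical in ∑ s ∈ nestings x y with SpellsSymbol ℓ s σ x z ∧ Spells ℓ s u z y,
        ∏ k ∈ Finset.Ioc x y, localWeight ℓ Q s k := by
  classical
  have hcut : {s ∈ nestings x y | SpellsSymbol ℓ s σ x z ∧ Spells ℓ s u z y} =
      {s ∈ {s ∈ nestings x y | IsCut s z} | SpellsSymbol ℓ s σ x z ∧ Spells ℓ s u z y} := by
    rw [Finset.filter_filter]
    exact Finset.filter_congr fun s hs => ⟨fun h => ⟨h.1.isCut hs, h⟩, And.right⟩
  rw [hcut, Finset.sum_filter, sum_nestings_isCut hxz hzy, symbolWeight, wordWeight,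
    Finset.sum_mul_sum, Finset.sum_filter]
  refine Finset.sum_congr rfl fun s hs => ?_
  rw [Finset.sum_filter, Finset.ite_sum_zero]
  refine Finset.sum_congr rfl fun t ht => ?_
  have hsn := (mem_nestings.1 hs).1
  have htn := (mem_nestings.1 ht).1
  have hn := (mem_nestings.1 (union_mem_nestings hs ht hxz hzy)).1
  have hl : AgreeOn s (s ∪ t) x z := agreeOn_union_left ht
  have hr : AgreeOn t (s ∪ t) z y := agreeOn_union_right hs
  have hσ : SpellsSymbol ℓ (s ∪ t) σ x z ↔ SpellsSymbol ℓ s σ x z :=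
    ⟨fun h => h.of_agreeOn hn hl.symm, fun h => h.of_agreeOn hsn hl⟩
  have hu : Spells ℓ (s ∪ t) u z y ↔ Spells ℓ t u z y :=
    ⟨fun h => h.of_agreeOn hn hr.symm, fun h => h.of_agreeOn htn hr⟩
  rw [hσ, hu, ← Finset.prod_Ioc_consecutive _ hxz hzy,
    ← prod_localWeight_congr hsn hn hl (isClosedOn_of_mem_nestings hs),
    ← prod_localWeight_congr htn hn hr (isClosedOn_of_mem_nestings ht), ite_and]

theorem wordWeight_cons (x y : ℕ) : wordWeight ℓ Q (σ :: u) x y =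
    ∑ z ∈ Finset.Icc x y, symbolWeight ℓ Q σ x z * wordWeight ℓ Q u z y := by
  classical
  have hmul z (hz : z ∈ Finset.Icc x y) := symbolWeight_mul_wordWeight (ℓ := ℓ) (Q := Q) (σ := σ)
    (u := u) (Finset.mem_Icc.1 hz).1 (Finset.mem_Icc.1 hz).2
  simp only [Finset.sum_congr rfl hmul, Finset.sum_filter]
  rw [Finset.sum_comm, wordWeight, Finset.sum_filter]
  refine Finset.sum_congr rfl fun s hs => ?_
  have hn := (mem_nestings.1 hs).1
  split_ifs with h
  · obtain ⟨z, hσ, hu⟩ := h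
    rw [Finset.sum_eq_single_of_mem z (Finset.mem_Icc.2 ⟨(hσ.lt hn).le, hu.le hn⟩)
      fun z' _ hne => if_neg fun h' => hne (h'.1.unique hn hσ), if_pos ⟨hσ, hu⟩]
  · exact (Finset.sum_eq_zero fun z _ => if_neg fun h' => h ⟨z, h'⟩).symm

theorem wordWeight_nil (x y : ℕ) :
    wordWeight ℓ Q [] x y = if x = y then 1 else 0 := by
  classical
  split_ifs with h
  · subst h
    simp [wordWeight, nestings_eq_singleton_empty, Spells]
  · simp [wordWeight, Spells, h]

theorem symbolWeight_inl [DecidableEq Δ] (a : Δ) (x z : ℕ) :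
    symbolWeight ℓ Q (Sum.inl a) x z = if z = x + 1 ∧ ℓ z = a then 1 else 0 := by
  classical
  by_cases h : z = x + 1
  · subst h
    simp [symbolWeight, nestings_eq_singleton_empty, Finset.sum_filter, SpellsSymbol, IsInternal,
      localWeight, IsCall]
  · simp [symbolWeight, SpellsSymbol, h]

end Weights

section HeadArcs

/-- The arcs that turn an interval `(x, y]` spelling the right-hand side of a rule with a code of
length `L` into one spelling the left-hand side. -/
def headArcs (x y L : ℕ) : Finset (ℕ × ℕ) := {(x + 1, y), (x + 2, x + 3 + L)}

theorem mem_headArcs {x y L p q : ℕ} :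
    (p, q) ∈ headArcs x y L ↔ p = x + 1 ∧ q = y ∨ p = x + 2 ∧ q = x + 3 + L := by
  simp only [headArcs, Finset.mem_insert, Finset.mem_singleton, Prod.mk.injEq]

/-- The ends of the head arcs of `(x, y]` for a code of length `L`, and the positions of the code,
are internal in `t`. -/
structure HasFreeHead (t : Finset (ℕ × ℕ)) (x y L : ℕ) : Prop where
  lt : x + 3 + L < y
  isInternal : ∀ k, x < k → (k ≤ x + 3 + L ∨ k = y) → IsInternal t k

variable {s t : Finset (ℕ × ℕ)} {x y L : ℕ}

theorem HasFreeHead.arc_bounds (ht : t ∈ nestings x y) (h : HasFreeHead t x y L) {p q : ℕ}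
    (hpq : (p, q) ∈ t) : x + 3 + L < p ∧ p < q ∧ q < y := by
  have hlt := (mem_nestings.1 ht).1.lt p q hpq
  have hb := (mem_nestings.1 ht).2 p q hpq
  have hp := h.isInternal p hb.1
  have hy := h.isInternal y (by omega) (Or.inr rfl) p q hpq
  have hnot : ¬(p ≤ x + 3 + L ∨ p = y) := fun hle => (hp hle p q hpq).1 rfl
  omega

theorem HasFreeHead.union_headArcs_mem_nestings (ht : t ∈ nestings x y)
    (h : HasFreeHead t x y L) : t ∪ headArcs x y L ∈ nestings x y := by
  have hb {p q} := h.arc_bounds ht (p := p) (q := q)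
  have hL := h.lt
  obtain ⟨hn, -⟩ := mem_nestings.1 ht
  have hmem (p q) : (p, q) ∈ t ∪ headArcs x y L ↔
      (p, q) ∈ t ∨ p = x + 1 ∧ q = y ∨ p = x + 2 ∧ q = x + 3 + L := by
    rw [Finset.mem_union, mem_headArcs]
  rw [mem_nestings]
  refine ⟨⟨fun p q => ?_, fun p q q' => ?_, fun p p' q => ?_, fun p q p' q' => ?_⟩, fun p q => ?_⟩
  · grind
  · grind [hn.right_unique p q q']
  · grind [hn.left_unique p p' q]
  · have := hn.noncrossing p q p' q'
    rw [hmem, hmem]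
    grind
  · grind

theorem agreeOn_union_headArcs {x' y' : ℕ} (hx : x + 2 ≤ x') (hL : y' ≤ x + 2 + L ∨ x + 3 + L ≤ x')
    (hy : y' < y) : AgreeOn t (t ∪ headArcs x y L) x' y' := by
  intro p q hpq
  rw [Finset.mem_union, mem_headArcs]
  exact (or_iff_left (by omega)).symm

variable {Δ : Type} {N : ℕ} {ℓ : ℕ → Δ} {r : Rule Δ N}

theorem spells_word_iff : Spells ℓ t r.word x y ↔
    ∃ z, y = z + 1 ∧ IsInternal t (x + 1) ∧ ℓ (x + 1) = r.outerCall ∧ IsInternal t (x + 2) ∧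
      ℓ (x + 2) = r.innerCall ∧
      Spells ℓ t (r.code.map Sum.inl : List (Δ ⊕ Fin N)) (x + 2) (x + 2 + r.code.length) ∧
      IsInternal t (x + 3 + r.code.length) ∧ ℓ (x + 3 + r.code.length) = r.innerRet ∧
      Spells ℓ t r.body (x + 3 + r.code.length) z ∧ IsInternal t y ∧ ℓ y = r.outerRet := by
  simp only [Rule.word, Spells, SpellsSymbol, spells_append]
  constructor
  · rintro ⟨_, ⟨rfl, h₁, hℓ₁⟩, _, ⟨rfl, h₂, hℓ₂⟩, c, hcode, _, ⟨rfl, h₃, hℓ₃⟩, z, hbody, _,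
      ⟨rfl, h₄, hℓ₄⟩, rfl⟩
    obtain rfl := hcode.of_map_inl.1
    have hpos : x + 1 + 1 + r.code.length + 1 = x + 3 + r.code.length := by omega
    rw [hpos] at h₃ hℓ₃ hbody
    exact ⟨z, rfl, h₁, hℓ₁, h₂, hℓ₂, hcode, h₃, hℓ₃, hbody, h₄, hℓ₄⟩
  · rintro ⟨z, rfl, h₁, hℓ₁, h₂, hℓ₂, hcode, h₃, hℓ₃, hbody, h₄, hℓ₄⟩
    have hpos : x + 1 + 1 + r.code.length + 1 = x + 3 + r.code.length := by omega
    rw [← hpos] at h₃ hℓ₃ hbody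
    exact ⟨_, ⟨rfl, h₁, hℓ₁⟩, _, ⟨rfl, h₂, hℓ₂⟩, _, hcode, _, ⟨rfl, h₃, hℓ₃⟩, z, hbody, _,
      ⟨rfl, h₄, hℓ₄⟩, rfl⟩

theorem hasFreeHead_of_spells_word (ht : IsNesting t) (h : Spells ℓ t r.word x y) :
    HasFreeHead t x y r.code.length := by
  obtain ⟨z, rfl, h₁, -, h₂, -, hcode, h₃, -, hbody, h₄, -⟩ := spells_word_iff.1 h
  have hz := hbody.le ht
  refine ⟨by omega, fun k hx hk => ?_⟩
  rcases hk with hk | rfl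
  · obtain rfl | rfl | ⟨hk₂, hk₃⟩ | rfl : k = x + 1 ∨ k = x + 2 ∨
        x + 2 < k ∧ k ≤ x + 2 + r.code.length ∨ k = x + 3 + r.code.length := by omega
    exacts [h₁, h₂, hcode.of_map_inl.2 k hk₂ hk₃, h₃]
  · exact h₄

theorem spells_word_iff_hasRuleAt (ht : t ∈ nestings x y) : Spells ℓ t r.word x y ↔
    HasFreeHead t x y r.code.length ∧
      HasRuleAt ℓ (t ∪ headArcs x y r.code.length) r (x + 1) := by
  have htn := (mem_nestings.1 ht).1
  have hcodeAgree (hy : x + 2 + r.code.length < y) :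
      AgreeOn t (t ∪ headArcs x y r.code.length) (x + 2) (x + 2 + r.code.length) :=
    agreeOn_union_headArcs le_rfl (Or.inl le_rfl) hy
  have hbodyAgree {z} (hz : z < y) :
      AgreeOn t (t ∪ headArcs x y r.code.length) (x + 3 + r.code.length) z :=
    agreeOn_union_headArcs (by omega) (Or.inr le_rfl) hz
  constructor
  · intro h
    have hfree := hasFreeHead_of_spells_word htn h
    have hL := hfree.lt
    obtain ⟨z, rfl, -, hℓ₁, -, hℓ₂, hcode, -, hℓ₃, hbody, -, hℓ₄⟩ := spells_word_iff.1 h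
    refine ⟨hfree, z, ?_, ?_, hℓ₁, hℓ₂, hcode.of_agreeOn htn (hcodeAgree (by omega)), hℓ₃,
      hbody.of_agreeOn htn (hbodyAgree (by omega)), hℓ₄⟩ <;>
      exact Finset.mem_union_right _ (mem_headArcs.2 (by omega))
  · rintro ⟨hfree, z, hout, -, hℓ₁, hℓ₂, hcode, hℓ₃, hbody, hℓ₄⟩
    have hsn := (mem_nestings.1 (hfree.union_headArcs_mem_nestings ht)).1
    obtain rfl : y = z + 1 :=
      hsn.right_unique _ _ _ (Finset.mem_union_right _ (mem_headArcs.2 (by omega))) hout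
    have hL := hfree.lt
    have hint := hfree.isInternal
    exact spells_word_iff.2 ⟨z, rfl, hint _ (by omega) (by omega), hℓ₁,
      hint _ (by omega) (by omega), hℓ₂,
      hcode.of_agreeOn hsn (hcodeAgree (by omega)).symm, hint _ (by omega) (by omega), hℓ₃,
      hbody.of_agreeOn hsn (hbodyAgree (by omega)).symm, hint _ (by omega) (by omega), hℓ₄⟩

theorem HasRuleAt.code_length_eq (hs : IsNesting s) {X : Fin N} (h : HasRuleAt ℓ s r (x + 1))
    (hX : SpellsSymbol ℓ s (Sum.inr X) x y) : r.code.length = X := by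
  obtain ⟨z, -, hin, -⟩ := h
  have := hs.right_unique _ _ _ hin hX.2
  omega

theorem hasFreeHead_sdiff (hs : s ∈ nestings x y) {X : Fin N}
    (h : HasRuleAt ℓ s r (x + 1)) (hX : SpellsSymbol ℓ s (Sum.inr X) x y) :
    headArcs x y r.code.length ⊆ s ∧
      HasFreeHead (s \ headArcs x y r.code.length) x y r.code.length := by
  obtain ⟨hsn, hsb⟩ := mem_nestings.1 hs
  have hlen := h.code_length_eq hsn hX
  obtain ⟨z, hout, hin, -, -, hcode, -, hbody, -⟩ := h
  have hz := hbody.le hsn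
  obtain rfl := hsn.right_unique _ _ _ hout hX.1
  refine ⟨?_, by omega, fun k hx hk p q hpq => ?_⟩
  · rintro ⟨p, q⟩ hpq
    rcases mem_headArcs.1 hpq with ⟨rfl, rfl⟩ | ⟨rfl, rfl⟩
    exacts [hX.1, hlen ▸ hX.2]
  · obtain ⟨hpq, hhead⟩ := Finset.mem_sdiff.1 hpq
    rw [mem_headArcs] at hhead
    have hint := fun hx hk => hcode.of_map_inl.2 k hx hk p q hpq
    have hp₁ := hsn.right_unique p q (z + 1) hpq
    have hp₂ := hsn.right_unique p q (x + 3 + r.code.length) hpq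
    have hq₁ := hsn.left_unique p (x + 1) q hpq
    have hq₂ := hsn.left_unique p (x + 2) q hpq
    have hlt := hsn.lt p q hpq
    have hb := hsb p q hpq
    have hcross := hsn.noncrossing (x + 2) (x + 3 + r.code.length) p q
    have := hX.1
    grind

end HeadArcs

section RuleWeights

variable {K Δ : Type} [CommSemiring K] {N : ℕ} {ℓ : ℕ → Δ} {Q : Rule Δ N →₀ K}
  {s t : Finset (ℕ × ℕ)} {x y L : ℕ} {r : Rule Δ N} {X : Fin N}

theorem IsInternal.not_isCall {k : ℕ} (h : IsInternal s k) : ¬IsCall s k :=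
  fun ⟨j, hj⟩ => (h k j hj).1 rfl

theorem localWeight_eq_one {k : ℕ} (h : ¬(IsCall s k ∧ IsCall s (k + 1))) :
    localWeight ℓ Q s k = 1 := if_neg h

theorem HasFreeHead.localWeight_union_headArcs (ht : t ∈ nestings x y) (h : HasFreeHead t x y L)
    {k : ℕ} (hx : x + 1 < k) (hy : k ≤ y) :
    localWeight ℓ Q (t ∪ headArcs x y L) k = localWeight ℓ Q t k := by
  have hbounds {p q} := h.arc_bounds ht (p := p) (q := q)
  have hL := h.lt
  by_cases hk : k ≤ x + 3 + L ∨ k = y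
  · rw [localWeight_eq_one, localWeight_eq_one fun hc =>
      (h.isInternal k (by omega) hk).not_isCall hc.1]
    rintro ⟨⟨j, hj⟩, j', hj'⟩
    rw [Finset.mem_union, mem_headArcs] at hj hj'
    have hkt : (k, j) ∉ t := fun hj => by have := hbounds hj; omega
    have hkt' : (k + 1, j') ∈ t → x + 3 + L < k + 1 := fun hj' => (hbounds hj').1
    grind
  · have htn := (mem_nestings.1 ht).1
    have hsn := (mem_nestings.1 (h.union_headArcs_mem_nestings ht)).1
    have hagree : AgreeOn t (t ∪ headArcs x y L) (x + 3 + L) (y - 1) :=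
      agreeOn_union_headArcs (by omega) (Or.inr le_rfl) (by omega)
    refine (localWeight_congr htn hsn hagree (fun p q hpq _ _ => ?_) (by omega) (by omega)).symm
    have := hbounds hpq
    omega

theorem prod_Ioc_eq_mul {M : Type*} [CommMonoid M] (f : ℕ → M) (hxy : x < y) :
    ∏ k ∈ Finset.Ioc x y, f k = f (x + 1) * ∏ k ∈ Finset.Ioc (x + 1) y, f k := by
  rw [← Finset.prod_Ioc_consecutive f (Nat.le_succ x) hxy, Nat.Ioc_succ_singleton,
    Finset.prod_singleton]

theorem HasFreeHead.prod_localWeight_union_headArcs (ht : t ∈ nestings x y)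
    (h : HasFreeHead t x y L) :
    ∏ k ∈ Finset.Ioc (x + 1) y, localWeight ℓ Q (t ∪ headArcs x y L) k =
      ∏ k ∈ Finset.Ioc x y, localWeight ℓ Q t k := by
  have hL := h.lt
  rw [prod_Ioc_eq_mul (localWeight ℓ Q t) (by omega : x < y), localWeight_eq_one fun hc =>
    (h.isInternal (x + 1) (by omega) (by omega)).not_isCall hc.1, one_mul]
  refine Finset.prod_congr rfl fun k hk => ?_
  rw [Finset.mem_Ioc] at hk
  exact h.localWeight_union_headArcs ht hk.1 hk.2

open Classical in
theorem sum_nestings_hasRuleAt (hr : r.code.length = (X : ℕ)) :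
    ∑ s ∈ nestings x y with SpellsSymbol ℓ s (Sum.inr X) x y ∧ HasRuleAt ℓ s r (x + 1),
      ∏ k ∈ Finset.Ioc (x + 1) y, localWeight ℓ Q s k = wordWeight ℓ Q r.word x y := by
  symm
  refine Finset.sum_bij' (fun t _ => t ∪ headArcs x y r.code.length)
    (fun s _ => s \ headArcs x y r.code.length) ?_ ?_ ?_ ?_ ?_
  · intro t h
    obtain ⟨ht, hw⟩ := Finset.mem_filter.1 h
    obtain ⟨hfree, hrule⟩ := (spells_word_iff_hasRuleAt ht).1 hw
    refine Finset.mem_filter.2 ⟨hfree.union_headArcs_mem_nestings ht, ⟨?_, ?_⟩, hrule⟩ <;>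
      exact Finset.mem_union_right _ (mem_headArcs.2 (by omega))
  · intro s h
    obtain ⟨hs, hX, hrule⟩ := Finset.mem_filter.1 h
    obtain ⟨hsub, hfree⟩ := hasFreeHead_sdiff hs hrule hX
    have ht : s \ headArcs x y r.code.length ∈ nestings x y :=
      mem_nestings.2 ⟨(mem_nestings.1 hs).1.mono Finset.sdiff_subset,
        fun p q hpq => (mem_nestings.1 hs).2 p q (Finset.sdiff_subset hpq)⟩
    refine Finset.mem_filter.2 ⟨ht, (spells_word_iff_hasRuleAt ht).2 ⟨hfree, ?_⟩⟩
    rwa [Finset.sdiff_union_of_subset hsub]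
  · intro t h
    obtain ⟨ht, hw⟩ := Finset.mem_filter.1 h
    have hfree := ((spells_word_iff_hasRuleAt ht).1 hw).1
    refine Finset.union_sdiff_cancel_right (Finset.disjoint_left.2 fun ⟨p, q⟩ hpq hhead => ?_)
    have hbounds := hfree.arc_bounds ht hpq
    rw [mem_headArcs] at hhead
    omega
  · intro s h
    obtain ⟨hs, hX, hrule⟩ := Finset.mem_filter.1 h
    exact Finset.sdiff_union_of_subset (hasFreeHead_sdiff hs hrule hX).1
  · intro t h
    obtain ⟨ht, hw⟩ := Finset.mem_filter.1 h
    exact (((spells_word_iff_hasRuleAt ht).1 hw).1.prod_localWeight_union_headArcs ht).symm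

open Classical in
theorem prod_localWeight_of_spellsSymbol (hs : IsNesting s)
    (hX : SpellsSymbol ℓ s (Sum.inr X) x y) :
    ∏ k ∈ Finset.Ioc x y, localWeight ℓ Q s k = ∑ r ∈ Q.support with r.code.length = (X : ℕ),
      if HasRuleAt ℓ s r (x + 1) then
        Q r * ∏ k ∈ Finset.Ioc (x + 1) y, localWeight ℓ Q s k else 0 := by
  rw [prod_Ioc_eq_mul _ (hX.lt hs), localWeight, if_pos ⟨⟨y, hX.1⟩, ⟨_, hX.2⟩⟩, Finset.sum_mul,
    Finset.sum_filter]
  refine Finset.sum_congr rfl fun r _ => ?_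
  rw [ite_mul, zero_mul, ← ite_and]
  exact if_congr ⟨fun h => ⟨h.code_length_eq hs hX, h⟩, And.right⟩ rfl rfl

theorem symbolWeight_inr (x y : ℕ) : symbolWeight ℓ Q (Sum.inr X) x y =
    ∑ r ∈ Q.support with r.code.length = (X : ℕ), Q r * wordWeight ℓ Q r.word x y := by
  classical
  rw [symbolWeight, Finset.sum_congr rfl fun s hs => prod_localWeight_of_spellsSymbol
    (mem_nestings.1 (Finset.mem_filter.1 hs).1).1 (Finset.mem_filter.1 hs).2, Finset.sum_comm]
  refine Finset.sum_congr rfl fun r hr => ?_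
  rw [← Finset.sum_filter, Finset.filter_filter, ← Finset.mul_sum,
    sum_nestings_hasRuleAt (Finset.mem_filter.1 hr).2]

end RuleWeights

section Solution

variable {K Δ : Type} [CommSemiring K] {N : ℕ} (ℓ : ℕ → Δ) (Q : Rule Δ N →₀ K) (n : ℕ)

theorem prod_ofIntervals_symbolWeight (u : List (Δ ⊕ Fin N)) :
    (u.map fun σ => ofIntervals n (symbolWeight ℓ Q σ)).prod =
      ofIntervals n (wordWeight ℓ Q u) := by
  induction u with
  | nil =>
    rw [List.map_nil, List.prod_nil, ← ofIntervals_eq_one]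
    exact congrArg (ofIntervals n) (funext₂ fun x y => (wordWeight_nil x y).symm)
  | cons σ u ih =>
    rw [List.map_cons, List.prod_cons, ih, ofIntervals_mul]
    exact congrArg (ofIntervals n) (funext₂ fun x y => (wordWeight_cons x y).symm)

theorem solvesRules_symbolWeight :
    SolvesRules Q (fun a => ofIntervals n (symbolWeight ℓ Q (Sum.inl a)))
      fun X => ofIntervals n (symbolWeight ℓ Q (Sum.inr X)) := by
  intro X
  have hα : Sum.elim (fun a => ofIntervals n (symbolWeight ℓ Q (Sum.inl a)))
      (fun X => ofIntervals n (symbolWeight ℓ Q (Sum.inr X))) =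
      fun σ => ofIntervals n (symbolWeight ℓ Q σ) := by
    ext1 (a | X) <;> rfl
  simp only [hα, prod_ofIntervals_symbolWeight]
  ext i j hij
  rw [sum_smul_apply, ofIntervals_apply _ hij, symbolWeight_inr]
  exact Finset.sum_congr rfl fun r _ => by rw [ofIntervals_apply _ hij]

theorem window_indicator_eq [DecidableEq Δ] {w : List Δ}
    (hℓ : ∀ k (hk : k < w.length), ℓ (k + 1) = w[k]) (a : Δ) :
    window w (fun v => if v = [a] then 1 else 0) =
      ofIntervals w.length (symbolWeight ℓ Q (Sum.inl a)) := by
  ext i j hij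
  rw [window, ofIntervals_apply _ hij, ofIntervals_apply _ hij, symbolWeight_inl]
  have := j.is_le
  have hlen : ((w.drop i).take (j - i)).length = j - i := by
    rw [List.length_take, List.length_drop]
    omega
  refine if_congr ⟨fun h => ?_, fun ⟨h, ha⟩ => ?_⟩ rfl rfl
  · have hj' : (j : ℕ) = i + 1 := by
      rw [h, List.length_singleton] at hlen
      omega
    refine ⟨hj', ?_⟩
    rw [hj', Nat.add_sub_cancel_left, List.drop_eq_getElem_cons (by omega), List.take_succ_cons,
      List.take_zero, List.singleton_inj] at h
    rw [hj', hℓ i (by omega), h]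
  · rw [h, hℓ i (by omega)] at ha
    rw [h, Nat.add_sub_cancel_left, List.drop_eq_getElem_cons (by omega), List.take_succ_cons,
      List.take_zero, ha]

theorem exists_rules_of_isAlgebraicSeries {S : List Δ → K} (hS : IsAlgebraicSeries K Δ S) :
    S [] = 0 ∧ ∃ (N : ℕ) (Q : Rule Δ N →₀ K) (T : List Δ →₀ K) (X₀ : Fin N), [] ∉ T.support ∧
      ∀ (w : List Δ) (ℓ : ℕ → Δ), (∀ k (hk : k < w.length), ℓ (k + 1) = w[k]) →
        S w = ∑ t ∈ T.support, T t * wordWeight ℓ Q (t.map Sum.inl) 0 w.length +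
          symbolWeight ℓ Q (Sum.inr X₀) 0 w.length := by
  classical
  obtain ⟨Y, _, P, Sol, hfin, hP, hSol, hSol₀, y₀, hSy₀⟩ := hS
  have hproper y : ∑ u ∈ (hfin y).toFinset, P y u • wordMonomial K u ∈
      wordSpan K (properWords Δ Y) := by
    refine sum_mem fun u hu => Submodule.smul_mem _ _ (wordMonomial_mem_wordSpan ?_)
    have hPu : P y u ≠ 0 := (hfin y).mem_toFinset.1 hu
    exact ⟨fun h => hPu (h ▸ (hP y).1), fun y' h => hPu (h ▸ (hP y).2 y')⟩
  obtain ⟨N, Q, T, X₀, hT, hnf⟩ := exists_normalForm hproper y₀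
  refine ⟨(hSy₀ []).trans (hSol₀ y₀), N, Q, T, X₀, hT, fun w ℓ hℓ => ?_⟩
  have hα a : window w (fun v => if v = [a] then (1 : K) else 0) ∈
      diagonalsFrom K w.length 1 := window_mem_diagonalsFrom_one w (by simp)
  obtain ⟨V, -, hV, hVeq⟩ := hnf _ _ (isNilpotentIdeal_diagonalsFrom_one) _ _ hα
    (fun y => window_mem_diagonalsFrom_one w (hSol₀ y)) (solves_window hfin hSol w)
  have hwindow : (fun a => window w fun v => if v = [a] then (1 : K) else 0) =
      fun a => ofIntervals w.length (symbolWeight ℓ Q (Sum.inl a)) :=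
    funext (window_indicator_eq ℓ Q hℓ)
  have hle : (0 : Fin (w.length + 1)) ≤ Fin.last w.length := Fin.zero_le _
  have hprod (t : List Δ) : (t.map fun a => ofIntervals w.length
      (symbolWeight ℓ Q (Sum.inl a))).prod = ofIntervals w.length
        (wordWeight ℓ Q (t.map Sum.inl)) := by
    rw [← prod_ofIntervals_symbolWeight, List.map_map]
    rfl
  rw [hV.unique hα (hwindow ▸ solvesRules_symbolWeight ℓ Q w.length), hwindow] at hVeq
  have hval := congrArg (fun f => f 0 (Fin.last w.length)) hVeq
  simp only [hprod, IncidenceAlgebra.add_apply, sum_smul_apply, window,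
    ofIntervals_apply _ hle] at hval
  simpa [hSy₀] using hval

end Solution

/-! ### First-order definability of the local data -/

/-- A `k`-ary relation between positions of a nested word is definable by a classical first-order
formula, whatever variables `xs` name its arguments. Its values outside the positions `1, …, n`
are irrelevant. -/
def FODefinable {Δ : Type} {k : ℕ} (R : NestedWord Δ → (Fin k → ℕ) → Prop) : Prop :=
  ∀ xs : Fin k → ℕ, ∃ ψ : FOFormula Δ, ψ.freeVars ⊆ Finset.univ.image xs ∧
    ∀ nw γ, (∀ i, γ (xs i) ∈ Finset.Icc 1 nw.len) → (ψ.Holds nw γ ↔ R nw fun i => γ (xs i))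

namespace FODefinable

variable {Δ : Type} {k : ℕ} {R R' : NestedWord Δ → (Fin k → ℕ) → Prop}

theorem congr (h : FODefinable R)
    (hRR' : ∀ nw v, (∀ i, v i ∈ Finset.Icc 1 nw.len) → (R nw v ↔ R' nw v)) :
    FODefinable R' := fun xs => by
  obtain ⟨ψ, hfree, hψ⟩ := h xs
  exact ⟨ψ, hfree, fun nw γ hγ => (hψ nw γ hγ).trans (hRR' nw _ hγ)⟩

theorem reindex (h : FODefinable R) {l : ℕ} (f : Fin k → Fin l) :
    FODefinable fun nw (v : Fin l → ℕ) => R nw (v ∘ f) := fun xs => by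
  obtain ⟨ψ, hfree, hψ⟩ := h (xs ∘ f)
  refine ⟨ψ, hfree.trans ?_, fun nw γ hγ => hψ nw γ fun i => hγ (f i)⟩
  grind

theorem not (h : FODefinable R) : FODefinable fun nw v => ¬ R nw v := fun xs => by
  obtain ⟨ψ, hfree, hψ⟩ := h xs
  exact ⟨ψ.not, hfree, fun nw γ hγ => not_congr (hψ nw γ hγ)⟩

theorem and (h : FODefinable R) (h' : FODefinable R') :
    FODefinable fun nw v => R nw v ∧ R' nw v := fun xs => by
  obtain ⟨ψ, hfree, hψ⟩ := h xs
  obtain ⟨ψ', hfree', hψ'⟩ := h' xs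
  exact ⟨ψ.and ψ', Finset.union_subset hfree hfree',
    fun nw γ hγ => and_congr (hψ nw γ hγ) (hψ' nw γ hγ)⟩

theorem ex {R : NestedWord Δ → (Fin (k + 1) → ℕ) → Prop} (h : FODefinable R) :
    FODefinable fun nw (v : Fin k → ℕ) => ∃ z ∈ Finset.Icc 1 nw.len, R nw (Fin.cons z v) :=
    fun xs => by
  obtain ⟨y, hy⟩ := Infinite.exists_notMem_finset (Finset.univ.image xs)
  have hxy (i) : xs i ≠ y := fun h => hy (h ▸ Finset.mem_image_of_mem _ (Finset.mem_univ i))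
  obtain ⟨ψ, hfree, hψ⟩ := h (Fin.cons y xs)
  refine ⟨ψ.exF y, fun z hz => ?_, fun nw γ hγ => ?_⟩
  · obtain ⟨hzy, hz⟩ := Finset.mem_erase.1 hz
    obtain ⟨i, -, rfl⟩ := Finset.mem_image.1 (hfree hz)
    cases i using Fin.cases with
    | zero => exact absurd rfl hzy
    | succ i => exact Finset.mem_image_of_mem _ (Finset.mem_univ i)
  · refine exists_congr fun z => and_congr_right fun hz => ?_
    have hcons : (fun i => Function.update γ y z ((Fin.cons y xs : Fin (k + 1) → ℕ) i)) =
        Fin.cons z fun i => γ (xs i) := by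
      ext i
      cases i using Fin.cases <;> simp [hxy]
    rw [hψ, hcons]
    intro i
    cases i using Fin.cases with
    | zero => simpa using hz
    | succ i => simpa [hxy i] using hγ i

end FODefinable

/-- First-order definability of a unary relation between positions. -/
def FODefinable₁ {Δ : Type} (R : NestedWord Δ → ℕ → Prop) : Prop :=
  FODefinable fun nw (v : Fin 1 → ℕ) => R nw (v 0)

/-- First-order definability of a binary relation between positions. -/
def FODefinable₂ {Δ : Type} (R : NestedWord Δ → ℕ → ℕ → Prop) : Prop :=
  FODefinable fun nw (v : Fin 2 → ℕ) => R nw (v 0) (v 1)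

section Closure

variable {Δ : Type}

namespace FODefinable₁

variable {A B : NestedWord Δ → ℕ → Prop}

theorem congr (hA : FODefinable₁ A)
    (hAB : ∀ nw i, i ∈ Finset.Icc 1 nw.len → (A nw i ↔ B nw i)) : FODefinable₁ B :=
  FODefinable.congr hA fun nw v hv => hAB nw (v 0) (hv 0)

theorem not (hA : FODefinable₁ A) : FODefinable₁ fun nw i => ¬ A nw i := FODefinable.not hA

theorem and (hA : FODefinable₁ A) (hB : FODefinable₁ B) :
    FODefinable₁ fun nw i => A nw i ∧ B nw i := FODefinable.and hA hB

theorem fst (hA : FODefinable₁ A) : FODefinable₂ fun nw i _ => A nw i :=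
  FODefinable.reindex hA ![0]

theorem snd (hA : FODefinable₁ A) : FODefinable₂ fun nw _ j => A nw j :=
  FODefinable.reindex hA ![1]

theorem ex (hA : FODefinable₁ A) :
    FODefinable fun nw (_ : Fin 0 → ℕ) => ∃ i ∈ Finset.Icc 1 nw.len, A nw i := FODefinable.ex hA

theorem lab (a : Δ) : FODefinable₁ fun (nw : NestedWord Δ) i => nw.letter i = a :=
  fun xs => ⟨.lab a (xs 0), by simp [FOFormula.freeVars], fun _ _ _ => Iff.rfl⟩

end FODefinable₁

namespace FODefinable₂

variable {A B : NestedWord Δ → ℕ → ℕ → Prop}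

theorem congr (hA : FODefinable₂ A) (hAB : ∀ nw i j, i ∈ Finset.Icc 1 nw.len →
    j ∈ Finset.Icc 1 nw.len → (A nw i j ↔ B nw i j)) : FODefinable₂ B :=
  FODefinable.congr hA fun nw v hv => hAB nw (v 0) (v 1) (hv 0) (hv 1)

theorem not (hA : FODefinable₂ A) : FODefinable₂ fun nw i j => ¬ A nw i j := FODefinable.not hA

theorem and (hA : FODefinable₂ A) (hB : FODefinable₂ B) :
    FODefinable₂ fun nw i j => A nw i j ∧ B nw i j := FODefinable.and hA hB

theorem swap (hA : FODefinable₂ A) : FODefinable₂ fun nw i j => A nw j i :=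
  FODefinable.reindex hA ![1, 0]

theorem ex (hA : FODefinable₂ A) :
    FODefinable₁ fun nw i => ∃ j ∈ Finset.Icc 1 nw.len, A nw i j := FODefinable.ex hA.swap

theorem comp (hA : FODefinable₂ A) (hB : FODefinable₂ B) :
    FODefinable₂ fun nw i j => ∃ z ∈ Finset.Icc 1 nw.len, A nw i z ∧ B nw z j :=
  FODefinable.ex ((FODefinable.reindex hA ![1, (0 : Fin 3)]).and
    (FODefinable.reindex hB ![0, (2 : Fin 3)]))

theorem eq : FODefinable₂ fun (_ : NestedWord Δ) i j => i = j := fun xs =>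
  ⟨.eqv (xs 0) (xs 1), by simp [FOFormula.freeVars, Finset.insert_subset_iff], fun _ _ _ => Iff.rfl⟩

theorem le : FODefinable₂ fun (_ : NestedWord Δ) i j => i ≤ j := fun xs =>
  ⟨.lev (xs 0) (xs 1), by simp [FOFormula.freeVars, Finset.insert_subset_iff], fun _ _ _ => Iff.rfl⟩

theorem rel : FODefinable₂ fun (nw : NestedWord Δ) i j => nw.rel i j := fun xs =>
  ⟨.nuv (xs 0) (xs 1), by simp [FOFormula.freeVars, Finset.insert_subset_iff], fun _ _ _ => Iff.rfl⟩

theorem lt : FODefinable₂ fun (_ : NestedWord Δ) i j => i < j :=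
  le.swap.not.congr fun _ _ _ _ _ => not_le

theorem succ : FODefinable₂ fun (_ : NestedWord Δ) i j => j = i + 1 :=
  (lt.and (lt.comp lt).not).congr fun nw i j hi hj => by
    simp only [Finset.mem_Icc] at hi hj ⊢
    refine ⟨fun ⟨_, hno⟩ => ?_, by grind⟩
    by_contra hne
    exact hno ⟨i + 1, by omega⟩

theorem dist (d : ℕ) : FODefinable₂ fun (_ : NestedWord Δ) i j => j = i + d := by
  induction d with
  | zero => exact eq.swap
  | succ d ih =>
    refine (ih.comp succ).congr fun nw i j _ hj => ?_
    rw [Finset.mem_Icc] at hj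
    grind

theorem shift (hA : FODefinable₂ A) (d : ℕ) :
    FODefinable₂ fun nw i j => i + d ≤ nw.len ∧ A nw (i + d) j :=
  ((dist d).comp hA).congr fun nw i j _ _ => by grind

theorem diag (hA : FODefinable₂ A) (d e : ℕ) :
    FODefinable₁ fun nw i => i + d ≤ nw.len ∧ i + e ≤ nw.len ∧ A nw (i + d) (i + e) :=
  ((dist e).and (hA.shift d)).ex.congr fun nw i _ => by grind

end FODefinable₂

namespace FODefinable₁

theorem shift {A : NestedWord Δ → ℕ → Prop} (hA : FODefinable₁ A) (d : ℕ) :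
    FODefinable₁ fun nw i => i + d ≤ nw.len ∧ A nw (i + d) :=
  ((FODefinable₂.dist d).and hA.snd).ex.congr fun nw i _ => by grind

theorem first : FODefinable₁ fun (_ : NestedWord Δ) i => i = 1 :=
  FODefinable₂.lt.swap.ex.not.congr fun nw i hi => by
    rw [Finset.mem_Icc] at hi
    refine ⟨fun hno => ?_, by grind⟩
    by_contra hne
    exact hno ⟨1, Finset.mem_Icc.2 (by omega), by omega⟩

theorem last : FODefinable₁ fun (nw : NestedWord Δ) i => i = nw.len :=
  FODefinable₂.lt.ex.not.congr fun nw i hi => by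
    rw [Finset.mem_Icc] at hi
    refine ⟨fun hno => ?_, by grind⟩
    by_contra hne
    exact hno ⟨nw.len, Finset.mem_Icc.2 (by omega), by omega⟩

end FODefinable₁

end Closure

namespace NestedWord

variable {Δ : Type} (nw : NestedWord Δ)

open Classical in
/-- The nesting relation of a nested word as a finite set of arcs. -/
noncomputable def arcs : Finset (ℕ × ℕ) :=
  {p ∈ Finset.Icc 1 nw.len ×ˢ Finset.Icc 1 nw.len | nw.rel p.1 p.2}

variable {nw} {i j : ℕ}

theorem mem_arcs : (i, j) ∈ nw.arcs ↔ nw.rel i j := by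
  simp only [arcs, Finset.mem_filter, Finset.mem_product, Finset.mem_Icc, and_iff_right_iff_imp]
  intro h
  have := nw.isNest.1 i j h
  simp only [len]
  omega

theorem lt_of_mem_arcs (h : (i, j) ∈ nw.arcs) : i < j := (nw.isNest.1 i j (mem_arcs.1 h)).2.1

theorem mem_Icc_of_mem_arcs (h : (i, j) ∈ nw.arcs) :
    i ∈ Finset.Icc 1 nw.len ∧ j ∈ Finset.Icc 1 nw.len := by
  obtain ⟨hi, hij, hj⟩ := nw.isNest.1 i j (mem_arcs.1 h)
  exact ⟨Finset.mem_Icc.2 ⟨hi, hij.le.trans hj⟩, Finset.mem_Icc.2 ⟨hi.trans hij.le, hj⟩⟩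

theorem isNesting_arcs (nw : NestedWord Δ) : IsNesting nw.arcs := by
  obtain ⟨-, hright, hleft, hnc⟩ := nw.isNest
  constructor
  · exact fun _ _ => lt_of_mem_arcs
  all_goals simpa only [mem_arcs]

theorem arcs_mem_nestings (nw : NestedWord Δ) : nw.arcs ∈ nestings 0 nw.len :=
  mem_nestings.2 ⟨nw.isNesting_arcs, fun _ _ h => by
    have := mem_Icc_of_mem_arcs h
    simp only [Finset.mem_Icc] at this
    omega⟩

theorem len_pos (nw : NestedWord Δ) : 1 ≤ nw.len := List.length_pos_iff.2 nw.ne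

end NestedWord

section LocalData

variable {Δ : Type} {N : ℕ}

theorem foDefinable₂_arcs : FODefinable₂ fun (nw : NestedWord Δ) i j => (i, j) ∈ nw.arcs :=
  FODefinable₂.rel.congr fun _ _ _ _ _ => NestedWord.mem_arcs.symm

theorem foDefinable₁_isCall : FODefinable₁ fun (nw : NestedWord Δ) i => IsCall nw.arcs i :=
  foDefinable₂_arcs.ex.congr fun _ _ _ => exists_congr fun _ =>
    and_iff_right_of_imp fun h => (NestedWord.mem_Icc_of_mem_arcs h).2

theorem foDefinable₁_isInternal : FODefinable₁ fun (nw : NestedWord Δ) i => IsInternal nw.arcs i :=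
  (foDefinable₂_arcs.ex.not.and foDefinable₂_arcs.swap.ex.not).congr fun nw i _ => by
    have hmem {p q : ℕ} := NestedWord.mem_Icc_of_mem_arcs (nw := nw) (i := p) (j := q)
    exact ⟨fun _ _ _ _ => by grind, fun h => by grind [IsInternal]⟩

theorem foDefinable₂_spellsSymbol (σ : Δ ⊕ Fin N) :
    FODefinable₂ fun nw i j => SpellsSymbol nw.letter nw.arcs σ i j := by
  cases σ with
  | inl a =>
    exact FODefinable₂.succ.and (foDefinable₁_isInternal.snd.and (FODefinable₁.lab a).snd)
  | inr X =>
    refine ((foDefinable₂_arcs.shift 1).and (foDefinable₂_arcs.diag 2 (3 + X)).fst).congr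
      fun nw i j _ _ => ?_
    have hmem {p q : ℕ} := NestedWord.mem_Icc_of_mem_arcs (nw := nw) (i := p) (j := q)
    simp only [Finset.mem_Icc] at hmem
    simp only [SpellsSymbol, ← add_assoc]
    grind

theorem foDefinable₂_spells (u : List (Δ ⊕ Fin N)) :
    FODefinable₂ fun nw i j => Spells nw.letter nw.arcs u i j := by
  induction u with
  | nil => exact FODefinable₂.eq
  | cons σ u ih =>
    refine ((foDefinable₂_spellsSymbol σ).comp ih).congr fun nw i j hi hj =>
      exists_congr fun z => and_iff_right_of_imp fun ⟨hσ, hu⟩ => ?_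
    have hiz := hσ.lt nw.isNesting_arcs
    have hzj := hu.le nw.isNesting_arcs
    simp only [Finset.mem_Icc] at *
    omega

theorem foDefinable₁_isCall_and_isCall_succ :
    FODefinable₁ fun (nw : NestedWord Δ) k => IsCall nw.arcs k ∧ IsCall nw.arcs (k + 1) :=
  (foDefinable₁_isCall.and (foDefinable₁_isCall.shift 1)).congr fun _ _ _ =>
    and_congr_right fun _ => and_iff_right_of_imp fun ⟨_, h⟩ =>
      (Finset.mem_Icc.1 (NestedWord.mem_Icc_of_mem_arcs h).1).2

theorem foDefinable₁_hasRuleAt (r : Rule Δ N) :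
    FODefinable₁ fun nw k => HasRuleAt nw.letter nw.arcs r k := by
  have hbody := (((foDefinable₂_spells r.body).comp .succ).shift (2 + r.code.length)).and
    (foDefinable₂_arcs.and (FODefinable₁.lab r.outerRet).snd)
  have hinner := (foDefinable₂_arcs.diag 1 (2 + r.code.length)).and
    (((FODefinable₁.lab r.innerCall).shift 1).and
      ((FODefinable₁.lab r.innerRet).shift (2 + r.code.length)))
  have hcode := (foDefinable₂_spells (r.code.map Sum.inl : List (Δ ⊕ Fin N))).diag 1
    (1 + r.code.length)
  refine ((FODefinable₁.lab r.outerCall).and (hinner.and (hcode.and hbody.ex))).congr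
    fun nw k hk => ?_
  simp only [← add_assoc, HasRuleAt]
  constructor
  · rintro ⟨ha, ⟨⟨-, -, hin⟩, ⟨-, hb⟩, -, hc⟩, ⟨-, -, hp⟩, -, -, ⟨-, z, -, hu, rfl⟩, hout, hd⟩
    exact ⟨z, hout, hin, ha, hb, hp, hc, hu, hd⟩
  · rintro ⟨z, hout, hin, ha, hb, hp, hc, hu, hd⟩
    have hout_mem := NestedWord.mem_Icc_of_mem_arcs hout
    have hin_mem := NestedWord.mem_Icc_of_mem_arcs hin
    have huz := hu.le nw.isNesting_arcs
    simp only [Finset.mem_Icc] at hk hout_mem hin_mem ⊢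
    exact ⟨ha, ⟨⟨by omega, by omega, hin⟩, ⟨by omega, hb⟩, by omega, hc⟩,
      ⟨by omega, by omega, hp⟩, z + 1, by omega, ⟨by omega, z, by omega, hu, rfl⟩, hout, hd⟩

theorem foDefinable_spellsSymbol_inr_len (X : Fin N) :
    FODefinable fun (nw : NestedWord Δ) (_ : Fin 0 → ℕ) =>
      SpellsSymbol nw.letter nw.arcs (Sum.inr X : Δ ⊕ Fin N) 0 nw.len := by
  have hroot := (FODefinable₁.first (Δ := Δ)).and ((foDefinable₂_arcs.diag 1 (2 + X)).and
    (foDefinable₂_arcs.and FODefinable₁.last.snd).ex)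
  refine FODefinable.congr hroot.ex fun nw v _ => ?_
  have hlen := nw.len_pos
  have hmem {p q : ℕ} := NestedWord.mem_Icc_of_mem_arcs (nw := nw) (i := p) (j := q)
  simp only [Finset.mem_Icc] at hmem ⊢
  have hX : 0 + 3 + (X : ℕ) = 1 + (2 + X) := by omega
  simp only [SpellsSymbol, hX]
  grind

theorem foDefinable_spells_inl_cons_len (a : Δ) (u : List (Δ ⊕ Fin N)) :
    FODefinable fun (nw : NestedWord Δ) (_ : Fin 0 → ℕ) =>
      Spells nw.letter nw.arcs (Sum.inl a :: u) 0 nw.len := by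
  have hroot := (FODefinable₁.first (Δ := Δ)).and <| foDefinable₁_isInternal.and <|
    (FODefinable₁.lab a).and ((foDefinable₂_spells u).and FODefinable₁.last.snd).ex
  refine FODefinable.congr hroot.ex fun nw v _ => ?_
  have hlen : nw.len ∈ Finset.Icc 1 nw.len := Finset.mem_Icc.2 ⟨nw.len_pos, le_rfl⟩
  constructor
  · rintro ⟨_, -, rfl, hint, ha, _, -, hu, rfl⟩
    exact ⟨1, ⟨rfl, hint, ha⟩, hu⟩
  · rintro ⟨_, ⟨rfl, hint, ha⟩, hu⟩
    exact ⟨1, Finset.mem_Icc.2 ⟨le_rfl, nw.len_pos⟩, rfl, hint, ha, nw.len, hlen, hu, rfl⟩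

end LocalData

/-! ### The defining sentence -/

/-- A `K`-valued function of `k` positions of a nested word is the semantics of an almost
unambiguous first-order formula, whatever variables `xs` name its arguments. -/
def AUDefinable {K Δ : Type} [CommSemiring K] {k : ℕ} (F : NestedWord Δ → (Fin k → ℕ) → K) :
    Prop :=
  ∀ xs : Fin k → ℕ, ∃ φ : WMSO K Δ, AUMSO φ ∧ φ.IsSRFOOn (Finset.univ.image xs) ∧
    ∀ nw γ₁ γ₂, (∀ i, γ₁ (xs i) ∈ Finset.Icc 1 nw.len) →
      φ.sem nw γ₁ γ₂ = F nw fun i => γ₁ (xs i)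

section Definability

variable {K Δ : Type} [CommSemiring K] {k : ℕ}

namespace AUDefinable

variable {F G : NestedWord Δ → (Fin k → ℕ) → K}

theorem const (c : K) : AUDefinable fun (_ : NestedWord Δ) (_ : Fin k → ℕ) => c := fun _ =>
  ⟨.const c, .const c, .const c, fun _ _ _ _ => rfl⟩

theorem add (hF : AUDefinable F) (hG : AUDefinable G) :
    AUDefinable fun nw v => F nw v + G nw v := fun xs => by
  obtain ⟨φ, hφ, hφ', hφF⟩ := hF xs
  obtain ⟨ψ, hψ, hψ', hψG⟩ := hG xs
  exact ⟨.or φ ψ, .or hφ hψ, hφ'.or hψ', fun nw γ₁ γ₂ hγ =>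
    congrArg₂ _ (hφF nw γ₁ γ₂ hγ) (hψG nw γ₁ γ₂ hγ)⟩

theorem sum {ι : Type*} {s : Finset ι} {F : ι → NestedWord Δ → (Fin k → ℕ) → K}
    (hF : ∀ i ∈ s, AUDefinable (F i)) : AUDefinable fun nw v => ∑ i ∈ s, F i nw v := by
  classical
  induction s using Finset.induction_on with
  | empty => exact .const 0
  | insert i s hi ih =>
    simp only [Finset.sum_insert hi]
    exact (hF i (Finset.mem_insert_self i s)).add
      (ih fun j hj => hF j (Finset.mem_insert_of_mem hj))

open Classical in
theorem ite {R : NestedWord Δ → (Fin k → ℕ) → Prop} (hR : FODefinable R) (c : K) :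
    AUDefinable fun nw v => if R nw v then c else 0 := fun xs => by
  obtain ⟨ψ, hfree, hψ⟩ := hR xs
  obtain ⟨⟨φ, hψφ, hφ⟩, -⟩ := ψ.hasUnambVersions (K := K)
  refine ⟨.and (.const c) φ, .and (.const c) (.unamb ⟨_, .inl hψφ⟩),
    .and (.const c) (hφ.isSRFOOn.mono hfree), fun nw γ₁ γ₂ hγ => ?_⟩
  rw [WMSO.sem, WMSO.sem, hφ.sem_eq, mul_ite, mul_one, mul_zero]
  exact if_congr (hψ nw γ₁ hγ) rfl rfl

end AUDefinable

variable {N : ℕ}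

theorem HasRuleAt.isCall_and_isCall_succ {ℓ : ℕ → Δ} {s : Finset (ℕ × ℕ)} {r : Rule Δ N} {k : ℕ}
    (h : HasRuleAt ℓ s r k) : IsCall s k ∧ IsCall s (k + 1) :=
  have ⟨_, hout, hin, _⟩ := h
  ⟨⟨_, hout⟩, ⟨_, hin⟩⟩

theorem auDefinable_localWeight (Q : Rule Δ N →₀ K) :
    AUDefinable fun nw (v : Fin 1 → ℕ) => localWeight nw.letter Q nw.arcs (v 0) := by
  classical
  convert (AUDefinable.ite (FODefinable.not foDefinable₁_isCall_and_isCall_succ) (1 : K)).add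
    (.sum fun r (_ : r ∈ Q.support) => .ite (foDefinable₁_hasRuleAt r) (Q r)) using 3 with nw v
  by_cases h : IsCall nw.arcs (v 0) ∧ IsCall nw.arcs (v 0 + 1)
  · simp [localWeight, h]
  · rw [localWeight_eq_one h, if_pos h, Finset.sum_eq_zero, add_zero]
    exact fun r _ => if_neg fun hr => h hr.isCall_and_isCall_succ

open Classical in
/-- The weight with which a nesting of the positions `1, …, n` is accepted at the root: it spells
a word with coefficient in `T`, or the start symbol `X₀`. -/
noncomputable def rootWeight (T : List Δ →₀ K) (X₀ : Fin N) (ℓ : ℕ → Δ) (n : ℕ)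
    (s : Finset (ℕ × ℕ)) : K :=
  (∑ t ∈ T.support, if Spells ℓ s (t.map Sum.inl : List (Δ ⊕ Fin N)) 0 n then T t else 0) +
    if SpellsSymbol ℓ s (Sum.inr X₀ : Δ ⊕ Fin N) 0 n then 1 else 0

theorem auDefinable_rootWeight {T : List Δ →₀ K} (hT : [] ∉ T.support) (X₀ : Fin N) :
    AUDefinable fun nw (_ : Fin 0 → ℕ) => rootWeight T X₀ nw.letter nw.len nw.arcs := by
  refine .add (.sum fun t ht => .ite ?_ (T t)) (.ite (foDefinable_spellsSymbol_inr_len X₀) 1)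
  cases t with
  | nil => exact absurd ht hT
  | cons a t => exact foDefinable_spells_inl_cons_len a _

theorem sum_nestings_rootWeight_mul_prod (T : List Δ →₀ K) (Q : Rule Δ N →₀ K) (X₀ : Fin N)
    (ℓ : ℕ → Δ) (n : ℕ) :
    ∑ s ∈ nestings 0 n, rootWeight T X₀ ℓ n s * ∏ k ∈ Finset.Ioc 0 n, localWeight ℓ Q s k =
      ∑ t ∈ T.support, T t * wordWeight ℓ Q (t.map Sum.inl) 0 n +
        symbolWeight ℓ Q (Sum.inr X₀) 0 n := by
  classical
  simp only [rootWeight, add_mul, Finset.sum_mul, Finset.sum_add_distrib, ite_mul, one_mul,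
    zero_mul, wordWeight, symbolWeight, Finset.mul_sum, Finset.sum_filter, mul_ite, mul_zero]
  rw [Finset.sum_comm]

theorem exists_sentence_sem_eq {T : List Δ →₀ K} (hT : [] ∉ T.support) (Q : Rule Δ N →₀ K)
    (X₀ : Fin N) : ∃ φ : WMSO K Δ, SRFO φ ∧ φ.Sentence ∧ ∀ nw γ₁ γ₂, φ.sem nw γ₁ γ₂ =
      rootWeight T X₀ nw.letter nw.len nw.arcs *
        ∏ k ∈ Finset.Ioc 0 nw.len, localWeight nw.letter Q nw.arcs k := by
  obtain ⟨A, -, hA, hAsem⟩ := auDefinable_rootWeight hT X₀ ![]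
  obtain ⟨W, hW, hW', hWsem⟩ := auDefinable_localWeight Q ![0]
  have hφ : (WMSO.and A (.alF 0 W)).IsSRFOOn ∅ := hA.and (hW'.alF hW)
  refine ⟨_, hφ.srfo, hφ.sentence, fun nw γ₁ γ₂ => ?_⟩
  rw [WMSO.sem, WMSO.sem, hAsem nw γ₁ γ₂ nofun]
  refine congrArg _ (Finset.prod_congr rfl fun k hk => ?_)
  rw [hWsem nw _ γ₂ fun i => by simpa [Nat.one_le_iff_ne_zero, Nat.pos_iff_ne_zero] using hk]
  simp

end Definability

section ExistsNu

variable {K Δ : Type} [CommSemiring K]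

theorem NestedWord.bijOn_arcs {w : List Δ} (hw : w ≠ []) :
    Set.BijOn arcs {nw : NestedWord Δ | nw.word = w} (nestings 0 w.length) := by
  refine ⟨fun nw hnw => ?_, fun nw hnw nw' hnw' harcs => ?_, fun s hs => ?_⟩
  · exact hnw ▸ nw.arcs_mem_nestings
  · have hrel : nw.rel = nw'.rel := by
      ext i j
      rw [← mem_arcs, ← mem_arcs, harcs]
    cases nw
    cases nw'
    simp_all
  · obtain ⟨hns, hb⟩ := mem_nestings.1 (Finset.mem_coe.1 hs)
    have hbounds (i j) (h : (i, j) ∈ s) : 1 ≤ i ∧ i < j ∧ j ≤ w.length :=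
      ⟨(hb i j h).1, hns.lt i j h, (hb i j h).2⟩
    refine ⟨⟨w, hw, fun i j => (i, j) ∈ s,
      hbounds, hns.right_unique, hns.left_unique, hns.noncrossing⟩, rfl, ?_⟩
    ext ⟨i, j⟩
    exact mem_arcs

theorem existsNuSem_nil (φ : WMSO K Δ) : existsNuSem φ [] = 0 :=
  finsum_eq_zero_of_forall_eq_zero fun nw => by simp [nw.ne]

theorem existsNuSem_eq_sum_nestings {φ : WMSO K Δ} {G : (ℕ → Δ) → ℕ → Finset (ℕ × ℕ) → K}
    (hφ : ∀ nw γ₁ γ₂, φ.sem nw γ₁ γ₂ = G nw.letter nw.len nw.arcs) {w : List Δ} (hw : w ≠ []) :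
    existsNuSem φ w =
      ∑ s ∈ nestings 0 w.length, G (fun j => w.getD (j - 1) (w.head hw)) w.length s := by
  rw [existsNuSem, ← finsum_mem_coe_finset]
  refine finsum_mem_eq_of_bijOn (s := {nw : NestedWord Δ | nw.word = w}) _
    (NestedWord.bijOn_arcs hw) ?_
  rintro nw rfl
  exact hφ _ _ _

end ExistsNu

/-- **Proposition (Mathissen).** Every algebraic formal power series is of the
form `⟦∃ν.φ⟧^nest` for some first-order sentence `φ ∈ sRFO(K)` over nested
words. -/
theorem algebraic_is_existsNu_of_sRFO
    (K Δ : Type) [CommSemiring K] (h01 : (0 : K) ≠ 1)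
    (S : List Δ → K) (hS : IsAlgebraicSeries K Δ S) :
    ∃ φ : WMSO K Δ, SRFO φ ∧ φ.Sentence ∧ ∀ w, S w = existsNuSem φ w := by
  obtain ⟨hS_nil, N, Q, T, X₀, hT, hS_eq⟩ := exists_rules_of_isAlgebraicSeries hS
  obtain ⟨φ, hφ, hφ_sentence, hφ_sem⟩ := exists_sentence_sem_eq hT Q X₀
  refine ⟨φ, hφ, hφ_sentence, fun w => ?_⟩
  rcases eq_or_ne w [] with rfl | hw
  · rw [hS_nil, existsNuSem_nil]
  · rw [hS_eq w (fun j => w.getD (j - 1) (w.head hw)) fun k hk => by simp [hk],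
      ← sum_nestings_rootWeight_mul_prod]
    exact (existsNuSem_eq_sum_nestings (G := fun ℓ n s =>
      rootWeight T X₀ ℓ n s * ∏ k ∈ Finset.Ioc 0 n, localWeight ℓ Q s k) hφ_sem hw).symm
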